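/- Let G be a discrete group and (A,G,α) a C*-dynamical system. Then (A,G,α) is nuclear if and only if the reduced crossed product A⋊_{α,r}G is a nuclear C*-algebra. -/

import Mathlib

noncomputable section

open scoped ComplexOrder
open Matrix
open scoped ENNReal

/-- Positivity of a matrix over a (possibly non-unital) C*-algebra:
`M` is positive iff it factors as `Nᴴ * N`. -/
def MatPos {R : Type*} [NonUnitalSemiring R] [StarRing R] {ν : Type*} [Fintype ν]
    (M : Matrix ν ν R) : Prop :=
  ∃ N : Matrix ν ν R, M = Nᴴ * N

/-- A linear map between C*-algebras is completely positive if all its matrix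
amplifications preserve positivity. -/
def IsCompletelyPositive {R S : Type*} [NonUnitalSemiring R] [StarRing R] [Module ℂ R]
    [NonUnitalSemiring S] [StarRing S] [Module ℂ S] (Φ : R →ₗ[ℂ] S) : Prop :=
  ∀ (n : ℕ) (M : Matrix (Fin n) (Fin n) R), MatPos M → MatPos (M.map Φ)

variable {H : Type*} [NormedAddCommGroup H] [InnerProductSpace ℂ H] [CompleteSpace H]

/-- The bounded operator on the Hilbert space `H ⊕₂ ⋯ ⊕₂ H` associated to an
operator-valued `n × n` matrix. -/
def matOp {ν : Type*} [Fintype ν] (M : Matrix ν ν (H →L[ℂ] H)) :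
    PiLp 2 (fun _ : ν => H) →L[ℂ] PiLp 2 (fun _ : ν => H) :=
  ((PiLp.continuousLinearEquiv 2 ℂ (fun _ : ν => H)).symm :
      (∀ _ : ν, H) →L[ℂ] PiLp 2 (fun _ : ν => H)) ∘L
    (ContinuousLinearMap.pi fun i =>
      (∑ j, (M i j) ∘L (ContinuousLinearMap.proj j)) ∘L
        ((PiLp.continuousLinearEquiv 2 ℂ (fun _ : ν => H)) :
          PiLp 2 (fun _ : ν => H) →L[ℂ] ∀ _ : ν, H))

variable {H : Type*} [NormedAddCommGroup H] [InnerProductSpace ℂ H] [CompleteSpace H]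
variable {X : Type*}

/-- Evaluation at a point, as a continuous linear map `ℓ²(X,H) → H`. -/
def lpEval (x : X) : lp (fun _ : X => H) 2 →L[ℂ] H :=
  LinearMap.mkContinuous
    { toFun := fun f => f x
      map_add' := fun f g => by
        have := lp.coeFn_add f g
        exact congrFun this x
      map_smul' := fun c f => by
        have := lp.coeFn_smul c f
        exact congrFun this x }
    1 (fun f => by
      simpa using lp.norm_apply_le_norm (by norm_num) f x)

/-- Inclusion of the `x`-th coordinate, as a continuous linear map `H → ℓ²(X,H)`. -/
def lpSingle (x : X) : H →L[ℂ] lp (fun _ : X => H) 2 := by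
  classical
  exact LinearMap.mkContinuous
    { toFun := fun ξ => lp.single 2 x ξ
      map_add' := fun ξ η => by
        apply lp.ext
        funext j
        by_cases h : j = x
        · subst h; simp [lp.single_apply_self]
        · simp [lp.single_apply_ne _ _ _ h, lp.coeFn_add]
      map_smul' := fun c ξ => by simp [lp.single_smul] }
    1 (fun ξ => by
      simpa using (lp.norm_single (p := 2) (by norm_num)
        (fun _ : X => ξ) x).le)

/-- The elementary operator `e_{x,y} ⊗ T` on `ℓ²(X,H)`. -/
def elemOp (x y : X) (T : H →L[ℂ] H) :
    lp (fun _ : X => H) 2 →L[ℂ] lp (fun _ : X => H) 2 :=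
  (lpSingle x) ∘L T ∘L (lpEval y)

/-- The operator `T_k` on `ℓ²(X,H)` associated with a finitely supported kernel
`k : X × X → B(H)`; it is (defined to be) `0` if `k` is not finitely supported. -/
def TOp (k : X × X → (H →L[ℂ] H)) :
    lp (fun _ : X => H) 2 →L[ℂ] lp (fun _ : X => H) 2 :=
  ∑ᶠ (p : X × X), elemOp p.1 p.2 (k p)

variable {G : Type*} [Group G]

/-- The left regular translation `λ_t` on `ℓ²(G,H)`. -/
def lam (t : G) : lp (fun _ : G => H) 2 →L[ℂ] lp (fun _ : G => H) 2 :=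
  LinearMap.mkContinuous
    { toFun := fun f =>
        ⟨fun s => f (t⁻¹ * s), by
          apply memℓp_gen
          have hf : Summable fun s => ‖f s‖ ^ (2 : ℝ≥0∞).toReal :=
            (lp.memℓp f).summable (by norm_num)
          exact ((Equiv.mulLeft t⁻¹).summable_iff
            (f := fun s => ‖f s‖ ^ (2 : ℝ≥0∞).toReal)).2 hf⟩
      map_add' := fun f g => by
        apply lp.ext; funext s
        exact congrFun (lp.coeFn_add f g) (t⁻¹ * s)
      map_smul' := fun c f => by
        apply lp.ext; funext s
        exact congrFun (lp.coeFn_smul c f) (t⁻¹ * s) }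
    1 (fun f => by
      rw [one_mul]
      refine lp.norm_le_of_tsum_le (by norm_num) (norm_nonneg f) ?_
      have h1 : ∑' (s : G), ‖f (t⁻¹ * s)‖ ^ (2 : ℝ≥0∞).toReal
          = ∑' (s : G), ‖f s‖ ^ (2 : ℝ≥0∞).toReal :=
        (Equiv.mulLeft t⁻¹).tsum_eq (fun s => ‖f s‖ ^ (2 : ℝ≥0∞).toReal)
      show ∑' (s : G), ‖f (t⁻¹ * s)‖ ^ (2 : ℝ≥0∞).toReal ≤ ‖f‖ ^ (2 : ℝ≥0∞).toReal
      rw [h1, ← lp.norm_rpow_eq_tsum (by norm_num) f])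

/-- The diagonal ("block multiplication") operator on `ℓ²(X,H)` associated with a
uniformly bounded family of operators. -/
def diagOp (T : X → (H →L[ℂ] H)) (C : ℝ) (hC : ∀ x, ‖T x‖ ≤ C) :
    lp (fun _ : X => H) 2 →L[ℂ] lp (fun _ : X => H) 2 := by
  have hC' : ∀ x, ‖T x‖ ≤ max C 0 := fun x => (hC x).trans (le_max_left _ _)
  have hr : (0:ℝ) < (2 : ℝ≥0∞).toReal := by norm_num
  have key : ∀ (f : lp (fun _ : X => H) 2) (x : X),
      ‖T x (f x)‖ ^ (2 : ℝ≥0∞).toReal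
        ≤ (max C 0) ^ (2 : ℝ≥0∞).toReal * ‖f x‖ ^ (2 : ℝ≥0∞).toReal := by
    intro f x
    have h1 : ‖T x (f x)‖ ≤ max C 0 * ‖f x‖ :=
      ((T x).le_opNorm (f x)).trans
        (mul_le_mul_of_nonneg_right (hC' x) (norm_nonneg _))
    calc ‖T x (f x)‖ ^ (2 : ℝ≥0∞).toReal
        ≤ (max C 0 * ‖f x‖) ^ (2 : ℝ≥0∞).toReal :=
          Real.rpow_le_rpow (norm_nonneg _) h1 hr.le
      _ = (max C 0) ^ (2 : ℝ≥0∞).toReal * ‖f x‖ ^ (2 : ℝ≥0∞).toReal :=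
          Real.mul_rpow (le_max_right _ _) (norm_nonneg _)
  have mem : ∀ f : lp (fun _ : X => H) 2, Memℓp (fun x => T x (f x)) 2 := by
    intro f
    apply memℓp_gen
    exact Summable.of_nonneg_of_le
      (fun x => Real.rpow_nonneg (norm_nonneg _) _) (key f)
      (((lp.memℓp f).summable hr).mul_left _)
  exact LinearMap.mkContinuous
    { toFun := fun f => ⟨fun x => T x (f x), mem f⟩
      map_add' := fun f g => by
        apply lp.ext; funext x
        have := congrFun (lp.coeFn_add f g) x
        show T x ((f + g) x) = _
        rw [this]
        exact map_add (T x) (f x) (g x)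
      map_smul' := fun c f => by
        apply lp.ext; funext x
        have := congrFun (lp.coeFn_smul c f) x
        show T x ((c • f) x) = _
        rw [this]
        simp [lp.coeFn_smul] }
    (max C 0) (fun f => by
      refine lp.norm_le_of_tsum_le hr (by positivity) ?_
      show ∑' (x : X), ‖T x (f x)‖ ^ (2 : ℝ≥0∞).toReal ≤ _
      calc ∑' (x : X), ‖T x (f x)‖ ^ (2 : ℝ≥0∞).toReal
          ≤ ∑' (x : X), (max C 0) ^ (2 : ℝ≥0∞).toReal * ‖f x‖ ^ (2 : ℝ≥0∞).toReal :=
            Summable.tsum_le_tsum (key f)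
              (Summable.of_nonneg_of_le
                (fun x => Real.rpow_nonneg (norm_nonneg _) _) (key f)
                (((lp.memℓp f).summable hr).mul_left _))
              (((lp.memℓp f).summable hr).mul_left _)
        _ = (max C 0) ^ (2 : ℝ≥0∞).toReal * ∑' (x : X), ‖f x‖ ^ (2 : ℝ≥0∞).toReal :=
            tsum_mul_left
        _ = (max C 0) ^ (2 : ℝ≥0∞).toReal * ‖f‖ ^ (2 : ℝ≥0∞).toReal := by
            rw [lp.norm_rpow_eq_tsum hr]
        _ = (max C 0 * ‖f‖) ^ (2 : ℝ≥0∞).toReal :=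
            (Real.mul_rpow (by positivity) (norm_nonneg _)).symm)

section CB

variable {A' B' : Type*} [AddCommMonoid A'] [Module ℂ A'] [AddCommMonoid B'] [Module ℂ B']
variable {K : Type*} [NormedAddCommGroup K] [InnerProductSpace ℂ K] [CompleteSpace K]

/-- All matrix amplifications of `Φ` are bounded by `C`, where matrices over the abstract
spaces are normed through the given embeddings into concrete operator algebras. -/
def CBBound (ιA : A' → (H →L[ℂ] H)) (ιB : B' → (K →L[ℂ] K))
    (Φ : A' →ₗ[ℂ] B') (C : ℝ) : Prop :=
  ∀ (n : ℕ) (M : Matrix (Fin n) (Fin n) A'),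
    ‖matOp (M.map (fun a => ιB (Φ a)))‖ ≤ C * ‖matOp (M.map ιA)‖

/-- Complete boundedness of a linear map, relative to embeddings of its domain and
codomain into concrete operator algebras. -/
def IsCB (ιA : A' → (H →L[ℂ] H)) (ιB : B' → (K →L[ℂ] K)) (Φ : A' →ₗ[ℂ] B') : Prop :=
  ∃ C : ℝ, 0 ≤ C ∧ CBBound ιA ιB Φ C

/-- The completely bounded norm of a linear map, relative to embeddings of its domain
and codomain into concrete operator algebras. -/
def cbNorm (ιA : A' → (H →L[ℂ] H)) (ιB : B' → (K →L[ℂ] K)) (Φ : A' →ₗ[ℂ] B') : ℝ :=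
  sInf { C : ℝ | 0 ≤ C ∧ CBBound ιA ιB Φ C }

end CB

section Schur

variable {A : Type*} [NonUnitalCStarAlgebra A]

/-- A *-representation is non-degenerate if the span of the vectors in its range is dense. -/
def NondegenerateRep {K : Type*} [NormedAddCommGroup K] [InnerProductSpace ℂ K]
    [CompleteSpace K] (ρ : A →⋆ₙₐ[ℂ] (K →L[ℂ] K)) : Prop :=
  Dense (Submodule.span ℂ {ξ : K | ∃ (a : A) (v : K), ρ a v = ξ} : Set K)

/-- A function `φ : X × X → CB(A, B(H))` is of positive type if it maps positive
matrices to positive matrices, entrywise. -/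
def PositiveType (φ : X → X → (A →ₗ[ℂ] (H →L[ℂ] H))) : Prop :=
  ∀ (m : ℕ) (x : Fin m → X) (a : Matrix (Fin m) (Fin m) A),
    MatPos a → MatPos (Matrix.of fun p q => φ (x p) (x q) (a p q))

/-- A kernel `k : X × X → A` is positive definite if all the matrices obtained by
sampling it at finitely many points are positive. -/
def PosDefKernel (k : X × X → A) : Prop :=
  ∀ (n : ℕ) (x : Fin n → X), MatPos (Matrix.of fun i j => k (x i, x j))

/-- The operator `T_k` on `ℓ²(X,H)` of a kernel `k : X × X → A`, via the embedding
`ι : A → B(H)` (it is `0` unless `k` is finitely supported). -/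
def TKer (ι : A →⋆ₙₐ[ℂ] (H →L[ℂ] H)) (k : X × X → A) :
    lp (fun _ : X => H) 2 →L[ℂ] lp (fun _ : X => H) 2 :=
  TOp (fun p => ι (k p))

/-- `C` is a complete bound for the Schur multiplication map `S_φ : T_k ↦ T_{φ·k}`,
tested on (matrices of) finitely supported kernels, which span a dense subspace of
`K(ℓ²(X)) ⊗ A`. -/
def SchurBound (ι : A →⋆ₙₐ[ℂ] (H →L[ℂ] H)) (φ : X → X → (A →ₗ[ℂ] (H →L[ℂ] H)))
    (C : ℝ) : Prop :=
  ∀ (n : ℕ) (k : Fin n → Fin n → (X × X → A)),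
    (∀ i j, (Function.support (k i j)).Finite) →
    ‖matOp (Matrix.of fun i j => TOp (fun p => φ p.1 p.2 (k i j p)))‖
      ≤ C * ‖matOp (Matrix.of fun i j => TKer ι (k i j))‖

/-- `φ` is a Schur `A`-multiplier: the map `S_φ : T_k ↦ T_{φ·k}` is completely bounded. -/
def IsSchurMultiplier (ι : A →⋆ₙₐ[ℂ] (H →L[ℂ] H))
    (φ : X → X → (A →ₗ[ℂ] (H →L[ℂ] H))) : Prop :=
  ∃ C : ℝ, 0 ≤ C ∧ SchurBound ι φ C

/-- The multiplier norm `‖φ‖_m = ‖S_φ‖_cb` of a Schur `A`-multiplier. -/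
def schurNorm (ι : A →⋆ₙₐ[ℂ] (H →L[ℂ] H))
    (φ : X → X → (A →ₗ[ℂ] (H →L[ℂ] H))) : ℝ :=
  sInf { C : ℝ | 0 ≤ C ∧ SchurBound ι φ C }

/-- Complete positivity of the map `S_φ : K(ℓ²(X)) ⊗ A → K(ℓ²(X)) ⊗ B(H)`, tested on
(matrices of) finitely supported kernels. -/
def SchurCP (ι : A →⋆ₙₐ[ℂ] (H →L[ℂ] H)) (φ : X → X → (A →ₗ[ℂ] (H →L[ℂ] H))) : Prop :=
  ∀ (n : ℕ) (k : Fin n → Fin n → (X × X → A)),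
    (∀ i j, (Function.support (k i j)).Finite) →
    MatPos (Matrix.of fun i j => TKer ι (k i j)) →
    MatPos (Matrix.of fun i j => TOp (fun p => φ p.1 p.2 (k i j p)))

end Schur

section Dynamics

variable {A : Type*} [NonUnitalCStarAlgebra A]

/-- `α` is an action of the group `G` on `A` by *-automorphisms. -/
def IsAction (α : G → A ≃⋆ₐ[ℂ] A) : Prop :=
  (∀ a, α 1 a = a) ∧ ∀ s t : G, ∀ a : A, α (s * t) a = α s (α t a)

/-- A *-automorphism of `A`, as a `ℂ`-linear map. -/
def autLin (e : A ≃⋆ₐ[ℂ] A) : A →ₗ[ℂ] A :=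
  { toFun := e
    map_add' := fun a b => map_add e a b
    map_smul' := fun c a => map_smul e c a }

/-- The representation `π` of `A` on `ℓ²(G,H)`: `(π(a)ξ)(s) = α_{s⁻¹}(a)(ξ(s))`. -/
def piRep (ι : A →⋆ₙₐ[ℂ] (H →L[ℂ] H)) (α : G → A ≃⋆ₐ[ℂ] A) (a : A) :
    lp (fun _ : G => H) 2 →L[ℂ] lp (fun _ : G => H) 2 :=
  diagOp (fun s => ι (α s⁻¹ a)) ‖a‖ (fun s =>
    (NonUnitalStarAlgHom.norm_apply_le ι (α s⁻¹ a)).trans_eq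
      (StarAlgEquiv.norm_map (α s⁻¹) a))

/-- The reduced crossed product `A ⋊_{α,r} G`, realised concretely on `ℓ²(G,H)` as the
norm closure of the linear span of the operators `π(a)λ_t`. -/
def CrossedSet (ι : A →⋆ₙₐ[ℂ] (H →L[ℂ] H)) (α : G → A ≃⋆ₐ[ℂ] A) :
    Set (lp (fun _ : G => H) 2 →L[ℂ] lp (fun _ : G => H) 2) :=
  closure (Submodule.span ℂ
    {x | ∃ (a : A) (t : G), x = piRep ι α a * lam t} : Set _)

/-- `E` is the canonical conditional expectation of the reduced crossed product onto `A`: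
it is characterised by `ι (E x) = (x)_{e,e}`, the `(e,e)` matrix entry of `x`. -/
def IsCondExp (ι : A →⋆ₙₐ[ℂ] (H →L[ℂ] H)) (α : G → A ≃⋆ₐ[ℂ] A)
    (E : (lp (fun _ : G => H) 2 →L[ℂ] lp (fun _ : G => H) 2) →ₗ[ℂ] A) : Prop :=
  ∀ x ∈ CrossedSet ι α, ι (E x) = (lpEval (1 : G)) ∘L x ∘L (lpSingle (1 : G))

/-- The defining property of the map `S_F` associated with `F : G → CB(A)`:
`S_F(π(a)λ_s) = π(F(s)(a))λ_s`. -/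
def HSGenProp (ι : A →⋆ₙₐ[ℂ] (H →L[ℂ] H)) (α : G → A ≃⋆ₐ[ℂ] A)
    (F : G → (A →ₗ[ℂ] A))
    (Φ : (lp (fun _ : G => H) 2 →L[ℂ] lp (fun _ : G => H) 2) →ₗ[ℂ]
         (lp (fun _ : G => H) 2 →L[ℂ] lp (fun _ : G => H) 2)) : Prop :=
  ∀ (a : A) (s : G), Φ (piRep ι α a * lam s) = piRep ι α (F s a) * lam s

/-- `Φ` maps the reduced crossed product into itself and, on matrices over the reduced
crossed product, all amplifications of `Φ` are bounded by `C`. -/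
def CBBoundOnCrossed (ι : A →⋆ₙₐ[ℂ] (H →L[ℂ] H)) (α : G → A ≃⋆ₐ[ℂ] A)
    (Φ : (lp (fun _ : G => H) 2 →L[ℂ] lp (fun _ : G => H) 2) →ₗ[ℂ]
         (lp (fun _ : G => H) 2 →L[ℂ] lp (fun _ : G => H) 2)) (C : ℝ) : Prop :=
  ∀ (n : ℕ) (M : Matrix (Fin n) (Fin n)
      (lp (fun _ : G => H) 2 →L[ℂ] lp (fun _ : G => H) 2)),
    (∀ i j, M i j ∈ CrossedSet ι α) →
      ‖matOp (M.map Φ)‖ ≤ C * ‖matOp M‖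

/-- `Φ` is completely positive on the reduced crossed product: matrices over the crossed
product which are positive are mapped to positive matrices. -/
def CPOnCrossed (ι : A →⋆ₙₐ[ℂ] (H →L[ℂ] H)) (α : G → A ≃⋆ₐ[ℂ] A)
    (Φ : (lp (fun _ : G => H) 2 →L[ℂ] lp (fun _ : G => H) 2) →ₗ[ℂ]
         (lp (fun _ : G => H) 2 →L[ℂ] lp (fun _ : G => H) 2)) : Prop :=
  (∀ x ∈ CrossedSet ι α, Φ x ∈ CrossedSet ι α) ∧
  ∀ (n : ℕ) (M : Matrix (Fin n) (Fin n)
      (lp (fun _ : G => H) 2 →L[ℂ] lp (fun _ : G => H) 2)),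
    (∀ i j, M i j ∈ CrossedSet ι α) → MatPos M → MatPos (M.map Φ)

/-- `F : G → CB(A)` is a Herz-Schur `(A,G,α)`-multiplier: the map `S_F` determined by
`S_F(π(a)λ_s) = π(F(s)(a))λ_s` extends to a completely bounded map on `A ⋊_{α,r} G`. -/
def IsHerzSchurMultiplier (ι : A →⋆ₙₐ[ℂ] (H →L[ℂ] H)) (α : G → A ≃⋆ₐ[ℂ] A)
    (F : G → (A →ₗ[ℂ] A)) : Prop :=
  ∃ Φ, HSGenProp ι α F Φ ∧ (∀ x ∈ CrossedSet ι α, Φ x ∈ CrossedSet ι α) ∧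
    ∃ C : ℝ, 0 ≤ C ∧ CBBoundOnCrossed ι α Φ C

/-- `F : G → CB(A)` is a completely positive Herz-Schur `(A,G,α)`-multiplier: the map
`S_F` extends to a completely positive (hence completely bounded) map on `A ⋊_{α,r} G`. -/
def IsHerzSchurMultiplierCP (ι : A →⋆ₙₐ[ℂ] (H →L[ℂ] H)) (α : G → A ≃⋆ₐ[ℂ] A)
    (F : G → (A →ₗ[ℂ] A)) : Prop :=
  ∃ Φ, HSGenProp ι α F Φ ∧ CPOnCrossed ι α Φ ∧
    ∃ C : ℝ, 0 ≤ C ∧ CBBoundOnCrossed ι α Φ C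

/-- The function `N(F) : G × G → CB(A)`, `N(F)(s,t)(a) = α_{s⁻¹}(F(st⁻¹)(α_s(a)))`. -/
def NF (α : G → A ≃⋆ₐ[ℂ] A) (F : G → (A →ₗ[ℂ] A)) : G → G → (A →ₗ[ℂ] A) :=
  fun s t => (autLin (α s⁻¹)) ∘ₗ (F (s * t⁻¹)) ∘ₗ (autLin (α s))

end Dynamics

section Trace

variable {A : Type*} [NonUnitalCStarAlgebra A]

/-- `τ` is a positive linear functional. -/
def IsPositiveFunctional (τ : A →ₗ[ℂ] ℂ) : Prop :=
  ∀ a : A, 0 ≤ τ (star a * a)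

/-- `τ` is tracial. -/
def IsTracial (τ : A →ₗ[ℂ] ℂ) : Prop :=
  ∀ a b : A, τ (a * b) = τ (b * a)

/-- `τ` is faithful. -/
def IsFaithfulFunctional (τ : A →ₗ[ℂ] ℂ) : Prop :=
  ∀ a : A, τ (star a * a) = 0 → a = 0

/-- The `L²`-norm `‖a‖_{2,τ} = τ(a*a)^{1/2}` associated with a positive functional `τ`. -/
def l2norm (τ : A →ₗ[ℂ] ℂ) (a : A) : ℝ :=
  Real.sqrt (τ (star a * a)).re

/-- A map `Φ : A → A` is `L²`-bounded by `C` with respect to `τ`. -/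
def L2BoundedBy (τ : A →ₗ[ℂ] ℂ) (Φ : A →ₗ[ℂ] A) (C : ℝ) : Prop :=
  ∀ a : A, l2norm τ (Φ a) ≤ C * l2norm τ a

/-- A map `Φ : A → A` is `L²`-bounded with respect to `τ`, i.e. it extends to a bounded
operator `T_Φ` on `L²(A,τ)`. -/
def L2Bounded (τ : A →ₗ[ℂ] ℂ) (Φ : A →ₗ[ℂ] A) : Prop :=
  ∃ C : ℝ, 0 ≤ C ∧ L2BoundedBy τ Φ C

/-- The norm of the extension `T_Φ` of `Φ` to `L²(A,τ)`. -/
def l2OpNorm (τ : A →ₗ[ℂ] ℂ) (Φ : A →ₗ[ℂ] A) : ℝ :=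
  sInf { C : ℝ | 0 ≤ C ∧ L2BoundedBy τ Φ C }

/-- `Φ` is `L²`-compact with respect to `τ`: the image under `Φ` of the `L²`-unit ball of
`A` is totally bounded in the `L²`-norm; equivalently, the extension `T_Φ` of `Φ` to
`L²(A,τ)` is a compact operator. -/
def L2Compact (τ : A →ₗ[ℂ] ℂ) (Φ : A →ₗ[ℂ] A) : Prop :=
  ∀ ε : ℝ, 0 < ε → ∃ S : Finset A, ∀ a : A, l2norm τ a ≤ 1 →
    ∃ b ∈ S, l2norm τ (Φ a - b) < ε

end Trace

section Props

variable {A : Type*} [CStarAlgebra A]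

/-- The pair `(A,τ)` has the C*-algebra Haagerup property (Definition 3.1, Dong). -/
def CStarHaagerup (τ : A →ₗ[ℂ] ℂ) : Prop :=
  ∃ (I : Type) (_ : Nonempty I) (_ : SemilatticeSup I) (Φ : I → (A →ₗ[ℂ] A)),
    (∀ i, Φ i 1 = 1) ∧
    (∀ i, IsCompletelyPositive (Φ i)) ∧
    (∀ i (a : A), τ (Φ i (star a * a)) ≤ τ (star a * a)) ∧
    (∀ i, L2Compact τ (Φ i)) ∧
    (∀ a : A, Filter.Tendsto (fun i => l2norm τ (Φ i a - a)) Filter.atTop (nhds 0))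

/-- `A` is a nuclear C*-algebra: there is a net of finite-rank completely positive
contractions converging to the identity in the point-norm topology. -/
def NuclearCStarAlgebra (A : Type*) [NonUnitalCStarAlgebra A] : Prop :=
  ∃ (I : Type) (_ : Nonempty I) (_ : SemilatticeSup I) (Φ : I → (A →ₗ[ℂ] A)),
    (∀ i, IsCompletelyPositive (Φ i)) ∧
    (∀ i (a : A), ‖Φ i a‖ ≤ ‖a‖) ∧
    (∀ i, FiniteDimensional ℂ (LinearMap.range (Φ i))) ∧
    (∀ a : A, Filter.Tendsto (fun i => ‖Φ i a - a‖) Filter.atTop (nhds 0))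

/-- A discrete group `G` has the Haagerup property: there is a net of normalised
positive-definite functions on `G`, vanishing at infinity, converging pointwise to `1`. -/
def GroupHaagerup (G : Type*) [Group G] : Prop :=
  ∃ (I : Type) (_ : Nonempty I) (_ : SemilatticeSup I) (φ : I → G → ℂ),
    (∀ i, φ i 1 = 1) ∧
    (∀ i (n : ℕ) (s : Fin n → G) (μ : Fin n → ℂ),
      0 ≤ ∑ k, ∑ l, (starRingEnd ℂ) (μ k) * φ i ((s k)⁻¹ * s l) * μ l) ∧
    (∀ i, ∀ ε : ℝ, 0 < ε → ∃ S : Finset G, ∀ s ∉ S, ‖φ i s‖ ≤ ε) ∧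
    (∀ s : G, Filter.Tendsto (fun i => φ i s) Filter.atTop (nhds 1))

end Props

section More

variable {A : Type*} [NonUnitalCStarAlgebra A]

/-- A star homomorphism, as a `ℂ`-linear map. -/
def iotaLin {B : Type*} [NonUnitalCStarAlgebra B] (ι : A →⋆ₙₐ[ℂ] B) : A →ₗ[ℂ] B :=
  { toFun := ι
    map_add' := fun a b => map_add ι a b
    map_smul' := fun c a => map_smul ι c a }

/-- A function `φ : X × X → CB(A)` with values in the maps on `A` is of positive type. -/
def PositiveTypeA (φ : X → X → (A →ₗ[ℂ] A)) : Prop :=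
  ∀ (m : ℕ) (x : Fin m → X) (a : Matrix (Fin m) (Fin m) A),
    MatPos a → MatPos (Matrix.of fun p q => φ (x p) (x q) (a p q))

/-- The representation `π` of `A` on `ℓ²(G,H)`, as a linear map. -/
def piRepLin (ι : A →⋆ₙₐ[ℂ] (H →L[ℂ] H)) (α : G → A ≃⋆ₐ[ℂ] A) :
    A →ₗ[ℂ] (lp (fun _ : G => H) 2 →L[ℂ] lp (fun _ : G => H) 2) :=
  { toFun := piRep ι α
    map_add' := fun a b => by
      apply ContinuousLinearMap.ext; intro f
      apply lp.ext; funext s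
      have h1 : (((piRep ι α a + piRep ι α b) f :
          lp (fun _ : G => H) 2) : ∀ _ : G, H) s
          = ((piRep ι α a f : ∀ _ : G, H) s) + ((piRep ι α b f : ∀ _ : G, H) s) := by
        rw [ContinuousLinearMap.add_apply]
        exact congrFun (lp.coeFn_add (piRep ι α a f) (piRep ι α b f)) s
      show ι (α s⁻¹ (a + b)) (f s) = _
      rw [h1]
      show _ = ι (α s⁻¹ a) (f s) + ι (α s⁻¹ b) (f s)
      rw [map_add (α s⁻¹), map_add ι, ContinuousLinearMap.add_apply]
    map_smul' := fun c a => by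
      apply ContinuousLinearMap.ext; intro f
      apply lp.ext; funext s
      have h1 : (((c • piRep ι α a) f :
          lp (fun _ : G => H) 2) : ∀ _ : G, H) s
          = c • ((piRep ι α a f : ∀ _ : G, H) s) := by
        rw [ContinuousLinearMap.smul_apply]
        exact congrFun (lp.coeFn_smul c (piRep ι α a f)) s
      show ι (α s⁻¹ (c • a)) (f s) = _
      rw [RingHom.id_apply, h1]
      show _ = c • ι (α s⁻¹ a) (f s)
      rw [map_smul (α s⁻¹), map_smul ι, ContinuousLinearMap.smul_apply] }

/-- The completely bounded norm of a map defined on the reduced crossed product. -/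
def cbNormOnCrossed (ι : A →⋆ₙₐ[ℂ] (H →L[ℂ] H)) (α : G → A ≃⋆ₐ[ℂ] A)
    (Φ : (lp (fun _ : G => H) 2 →L[ℂ] lp (fun _ : G => H) 2) →ₗ[ℂ]
         (lp (fun _ : G => H) 2 →L[ℂ] lp (fun _ : G => H) 2)) : ℝ :=
  sInf { C : ℝ | 0 ≤ C ∧ CBBoundOnCrossed ι α Φ C }

/-- The `L²`-norm `‖x‖_{2,τ'}` on the reduced crossed product induced by the trace
`τ' = τ ∘ E`. -/
def l2normCr (τ : A →ₗ[ℂ] ℂ)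
    (E : (lp (fun _ : G => H) 2 →L[ℂ] lp (fun _ : G => H) 2) →ₗ[ℂ] A)
    (x : lp (fun _ : G => H) 2 →L[ℂ] lp (fun _ : G => H) 2) : ℝ :=
  Real.sqrt (τ (E (star x * x))).re

/-- The map `h_Φ : G → CB(A)` associated with a map `Φ` on the reduced crossed product:
`h_Φ(s)(a) = E(Φ(π(a)λ_s)λ_s*)`. -/
def hMap (ι : A →⋆ₙₐ[ℂ] (H →L[ℂ] H)) (α : G → A ≃⋆ₐ[ℂ] A)
    (E : (lp (fun _ : G => H) 2 →L[ℂ] lp (fun _ : G => H) 2) →ₗ[ℂ] A)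
    (Φ : (lp (fun _ : G => H) 2 →L[ℂ] lp (fun _ : G => H) 2) →ₗ[ℂ]
         (lp (fun _ : G => H) 2 →L[ℂ] lp (fun _ : G => H) 2))
    (s : G) : A →ₗ[ℂ] A :=
  E ∘ₗ (LinearMap.mulRight ℂ (star (lam s))) ∘ₗ Φ ∘ₗ
    (LinearMap.mulRight ℂ (lam (H := H) s)) ∘ₗ piRepLin ι α

end More

section BigProps

open Filter

variable {A : Type*} [CStarAlgebra A]

/-- The Haagerup property for the `C*`-dynamical system `(A,G,α,τ)` (Definition 3.3). -/
def DynHaagerup (ι : A →⋆ₙₐ[ℂ] (H →L[ℂ] H)) (α : G → A ≃⋆ₐ[ℂ] A)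
    (τ : A →ₗ[ℂ] ℂ) : Prop :=
  ∃ (I : Type) (_ : Nonempty I) (_ : SemilatticeSup I) (F : I → G → (A →ₗ[ℂ] A)),
    (∀ i, IsHerzSchurMultiplierCP ι α (F i)) ∧
    (∀ i, F i 1 1 = 1) ∧
    (∀ i (a : A), τ (F i 1 (star a * a)) ≤ τ (star a * a)) ∧
    (∀ i (t : G), L2Compact τ (F i t)) ∧
    (∀ i, ∀ ε : ℝ, 0 < ε → ∃ S : Finset G, ∀ s ∉ S, l2OpNorm τ (F i s) ≤ ε) ∧
    (∀ (t : G) (a : A),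
      Tendsto (fun i => l2norm τ (F i t a - a)) atTop (nhds 0))

/-- The C*-algebra Haagerup property for the reduced crossed product `A ⋊_{α,r} G`
endowed with the induced trace `τ' = τ ∘ E` (Definition 3.1). -/
def CrossedCStarHaagerup (ι : A →⋆ₙₐ[ℂ] (H →L[ℂ] H)) (α : G → A ≃⋆ₐ[ℂ] A)
    (τ : A →ₗ[ℂ] ℂ)
    (E : (lp (fun _ : G => H) 2 →L[ℂ] lp (fun _ : G => H) 2) →ₗ[ℂ] A) : Prop :=
  ∃ (I : Type) (_ : Nonempty I) (_ : SemilatticeSup I)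
    (Φ : I → ((lp (fun _ : G => H) 2 →L[ℂ] lp (fun _ : G => H) 2) →ₗ[ℂ]
              (lp (fun _ : G => H) 2 →L[ℂ] lp (fun _ : G => H) 2))),
    (∀ i, Φ i 1 = 1) ∧
    (∀ i, CPOnCrossed ι α (Φ i)) ∧
    (∀ i, ∀ x ∈ CrossedSet ι α, τ (E (Φ i (star x * x))) ≤ τ (E (star x * x))) ∧
    (∀ i, ∀ ε : ℝ, 0 < ε →
      ∃ S : Finset (lp (fun _ : G => H) 2 →L[ℂ] lp (fun _ : G => H) 2),
        ∀ x ∈ CrossedSet ι α, l2normCr τ E x ≤ 1 →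
          ∃ b ∈ S, l2normCr τ E (Φ i x - b) < ε) ∧
    (∀ x ∈ CrossedSet ι α,
      Tendsto (fun i => l2normCr τ E (Φ i x - x)) atTop (nhds 0))

end BigProps

section Nuc

open Filter

variable {A : Type*} [NonUnitalCStarAlgebra A]

/-- Nuclearity of the reduced crossed product `A ⋊_{α,r} G`: there is a net of
finite-rank completely positive contractions on it converging to the identity in the
point-norm topology. -/
def CrossedNuclear (ι : A →⋆ₙₐ[ℂ] (H →L[ℂ] H)) (α : G → A ≃⋆ₐ[ℂ] A) : Prop :=
  ∃ (I : Type) (_ : Nonempty I) (_ : SemilatticeSup I)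
    (Φ : I → ((lp (fun _ : G => H) 2 →L[ℂ] lp (fun _ : G => H) 2) →ₗ[ℂ]
              (lp (fun _ : G => H) 2 →L[ℂ] lp (fun _ : G => H) 2))),
    (∀ i, CPOnCrossed ι α (Φ i)) ∧
    (∀ i, ∀ x ∈ CrossedSet ι α, ‖Φ i x‖ ≤ ‖x‖) ∧
    (∀ i, FiniteDimensional ℂ
      (Submodule.span ℂ ((fun x => Φ i x) '' CrossedSet ι α))) ∧
    (∀ x ∈ CrossedSet ι α, Tendsto (fun i => ‖Φ i x - x‖) atTop (nhds 0))

/-- Nuclearity of the `C*`-dynamical system `(A,G,α)` (Definition 4.2): a net of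
completely positive, finitely supported Herz-Schur multipliers, with `‖F_i(e)‖_cb ≤ 1`,
with finite-rank values, converging to the identity pointwise in norm. -/
def DynNuclear (ι : A →⋆ₙₐ[ℂ] (H →L[ℂ] H)) (α : G → A ≃⋆ₐ[ℂ] A) : Prop :=
  ∃ (I : Type) (_ : Nonempty I) (_ : SemilatticeSup I) (F : I → G → (A →ₗ[ℂ] A)),
    (∀ i, IsHerzSchurMultiplierCP ι α (F i)) ∧
    (∀ i, (Function.support (F i)).Finite) ∧
    (∀ i, CBBound (fun a => ι a) (fun a => ι a) (F i 1) 1) ∧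
    (∀ i (s : G), FiniteDimensional ℂ (LinearMap.range (F i s))) ∧
    (∀ (s : G) (a : A), Tendsto (fun i => ‖F i s a - a‖) atTop (nhds 0))

end Nuc

section Amen

open Filter

variable {A : Type*} [CStarAlgebra A]

/-- Amenability of the action `α` of a discrete group `G` on a unital C*-algebra `A`
(Definition 4.5): a net of finitely supported functions `T_i : G → Z(A)⁺` with
`Σ_s T_i(s)² = 1` and `‖Σ_s (T_i(s) - α_t(T_i(t⁻¹s)))*(T_i(s) - α_t(T_i(t⁻¹s)))‖ → 0`. -/
def AmenableAction {G : Type*} [Group G] (α : G → A ≃⋆ₐ[ℂ] A) : Prop :=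
  ∃ (I : Type) (_ : Nonempty I) (_ : SemilatticeSup I) (T : I → G → A),
    (∀ i, (Function.support (T i)).Finite) ∧
    (∀ i (s : G) (c : A), Commute (T i s) c) ∧
    (∀ i (s : G), ∃ b : A, T i s = star b * b) ∧
    (∀ i, ∑ᶠ s : G, T i s * T i s = 1) ∧
    (∀ t : G, Tendsto (fun i =>
        ‖∑ᶠ s : G, star (T i s - α t (T i (t⁻¹ * s))) *
          (T i s - α t (T i (t⁻¹ * s)))‖) atTop (nhds 0))

end Amen

universe u v w

/-- Data for a Stinespring-type representation of an operator-valued function on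
`X × X`: a Hilbert space `K`, a *-representation `ρ : A → B(K)` and
families of operators `V, W : X → B(H,K)`. -/
structure OpValuedRep (A : Type u) [NonUnitalCStarAlgebra A]
    (H : Type v) [NormedAddCommGroup H] [InnerProductSpace ℂ H] [CompleteSpace H]
    (X : Type w) where
  /-- the Hilbert space of the representation -/
  K : Type (max u v w)
  [nacg : NormedAddCommGroup K]
  [ips : InnerProductSpace ℂ K]
  [cpl : CompleteSpace K]
  /-- the representation -/
  ρ : A →⋆ₙₐ[ℂ] (K →L[ℂ] K)
  /-- the left family of operators -/
  V : X → (H →L[ℂ] K)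
  /-- the right family of operators -/
  W : X → (H →L[ℂ] K)

attribute [instance] OpValuedRep.nacg OpValuedRep.ips OpValuedRep.cpl

end
noncomputable section
open scoped ComplexOrder ENNReal
open Matrix

/-!
A completely positive Herz-Schur multiplier `F` induces a completely positive map `S_F` on the
reduced crossed product. An approximate unit coming from `A` is carried by `S_F` to its image
under `F(e)`, so `‖S_F‖ ≤ ‖F(e)‖_cb ≤ 1`, and density of the algebraic crossed product turns the
convergence of the multipliers into convergence `S_F → id`.

Conversely, a finite-rank completely positive contraction on the crossed product can be perturbed,
staying completely positive and contractive, to a map `Φ` with values in the algebraic crossed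
product. Its Fourier coefficient maps `h(s)(a) = E(Φ(π(a)λ_s)λ_s*)`, with `E` the conditional
expectation onto `A`, are then of finite rank and vanish for all but finitely many `s`. Complete
positivity of `S_h` is read off matrix entries over `G`: the `(p, q)` entry of `S_h(x)` is that of
`Φ` applied to the Fourier term of `x` at `p q⁻¹`, and the matrices formed by these Fourier terms
are positive when `x` is.
-/

open Filter Topology
open scoped lp InnerProductSpace

local notation "𝓑(" K ")" => K →L[ℂ] K

section OperatorMatrices

variable {K : Type*} [NormedAddCommGroup K] [InnerProductSpace ℂ K]
variable {ν : Type*} [Fintype ν]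

theorem matOp_apply (M : Matrix ν ν 𝓑(K)) (x : PiLp 2 fun _ : ν => K) (i : ν) :
    matOp M x i = ∑ j, M i j (x j) := by
  simp [matOp]

theorem inner_matOp (M : Matrix ν ν 𝓑(K)) (x y : PiLp 2 fun _ : ν => K) :
    ⟪x, matOp M y⟫_ℂ = ∑ p, ∑ q, ⟪x p, M p q (y q)⟫_ℂ := by
  simp [PiLp.inner_apply, matOp_apply, inner_sum]

theorem matOp_add (M N : Matrix ν ν 𝓑(K)) : matOp (M + N) = matOp M + matOp N := by
  ext x i
  simp [matOp_apply, Finset.sum_add_distrib]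

theorem matOp_smul (c : ℂ) (M : Matrix ν ν 𝓑(K)) : matOp (c • M) = c • matOp M := by
  ext x i
  simp [matOp_apply, Finset.smul_sum]

theorem matOp_mul (M N : Matrix ν ν 𝓑(K)) : matOp (M * N) = matOp M * matOp N := by
  ext x i
  simp only [matOp_apply, Matrix.mul_apply, mul_apply_eq_comp, map_sum, _root_.sum_apply]
  exact Finset.sum_comm

theorem matOp_diagonal_apply [DecidableEq ν] (d : ν → 𝓑(K)) (x : PiLp 2 fun _ : ν => K) (i : ν) :
    matOp (diagonal d) x i = d i (x i) := by
  rw [matOp_apply, Finset.sum_eq_single i (fun j _ hj => by simp [hj.symm]) (by simp)]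
  simp

theorem matOp_single_apply [DecidableEq ν] (M : Matrix ν ν 𝓑(K)) (i j : ν) (v : K) :
    matOp M (PiLp.single 2 j v) i = M i j v := by
  rw [matOp_apply, Finset.sum_eq_single j (fun k _ hk => by simp [hk]) (by simp)]
  simp

theorem matOp_injective : Function.Injective (matOp : Matrix ν ν 𝓑(K) → _) := by
  classical
  intro M N h
  ext i j v
  rw [← matOp_single_apply M, h, matOp_single_apply]

theorem matOp_surjective : Function.Surjective (matOp : Matrix ν ν 𝓑(K) → _) := by
  classical
  intro T
  refine ⟨of fun i j => PiLp.proj (𝕜 := ℂ) 2 (fun _ => K) i ∘L T ∘L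
    (PiLp.continuousLinearEquiv 2 ℂ fun _ => K).symm.toContinuousLinearMap ∘L
      ContinuousLinearMap.single ℂ (fun _ => K) j, ?_⟩
  ext x i
  have hx : x = ∑ j, WithLp.toLp 2 (Pi.single j (x j)) := by
    ext k
    simp [Pi.single_apply]
  conv_rhs => rw [hx, map_sum]
  simp [matOp_apply]

theorem norm_matOp_diagonal_le [DecidableEq ν] (a : 𝓑(K)) :
    ‖matOp (diagonal fun _ : ν => a)‖ ≤ ‖a‖ := by
  refine ContinuousLinearMap.opNorm_le_bound _ (norm_nonneg a) fun x => ?_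
  refine le_of_sq_le_sq ?_ (by positivity)
  rw [mul_pow, PiLp.norm_sq_eq_of_L2, PiLp.norm_sq_eq_of_L2, Finset.mul_sum]
  refine Finset.sum_le_sum fun i _ => ?_
  rw [matOp_diagonal_apply, ← mul_pow]
  gcongr
  exact a.le_opNorm _

theorem norm_matOp_of_unique [Unique ν] (M : Matrix ν ν 𝓑(K)) :
    ‖matOp M‖ = ‖M default default‖ := by
  have norm_eq (x : PiLp 2 fun _ : ν => K) : ‖x‖ = ‖x default‖ := by
    simp [PiLp.norm_eq_of_L2]
  refine le_antisymm (ContinuousLinearMap.opNorm_le_bound _ (norm_nonneg _) fun x => ?_)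
    (ContinuousLinearMap.opNorm_le_bound _ (norm_nonneg (matOp M)) fun x => ?_)
  · simpa [norm_eq, matOp_apply] using (M default default).le_opNorm (x default)
  · simpa [norm_eq, matOp_apply] using (matOp M).le_opNorm (WithLp.toLp 2 fun _ => x)

theorem matOp_conjTranspose [CompleteSpace K] (M : Matrix ν ν 𝓑(K)) :
    matOp Mᴴ = star (matOp M) := by
  rw [ContinuousLinearMap.star_eq_adjoint, ContinuousLinearMap.eq_adjoint_iff]
  intro x y
  simp only [PiLp.inner_apply, matOp_apply, sum_inner, inner_sum, conjTranspose_apply,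
    ContinuousLinearMap.star_eq_adjoint, ContinuousLinearMap.adjoint_inner_left]
  exact Finset.sum_comm

end OperatorMatrices

section Positivity

variable {ν κ : Type*} [Fintype ν] [Fintype κ]

theorem MatPos.conj_diagonal {R : Type*} [NonUnitalSemiring R] [StarRing R] {M : Matrix ν ν R}
    (hM : MatPos M) (d : ν → R) : MatPos (of fun p q => star (d p) * M p q * d q) := by
  obtain ⟨N, rfl⟩ := hM
  refine ⟨of fun k q => N k q * d q, ?_⟩
  ext p q
  simp [mul_apply, Finset.mul_sum, Finset.sum_mul, mul_assoc]

theorem MatPos.star_apply {R : Type*} [NonUnitalSemiring R] [StarRing R] {M : Matrix ν ν R}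
    (hM : MatPos M) (p q : ν) : star (M p q) = M q p := by
  obtain ⟨N, rfl⟩ := hM
  simp [mul_apply]

variable {K : Type*} [NormedAddCommGroup K] [InnerProductSpace ℂ K]

theorem clm_nonneg_iff_inner_nonneg {T : 𝓑(K)} : 0 ≤ T ↔ ∀ x, 0 ≤ ⟪x, T x⟫_ℂ := by
  rw [ContinuousLinearMap.nonneg_iff_isPositive]
  refine ⟨fun hT x => hT.inner_nonneg_right x, fun hT => ?_⟩
  rw [ContinuousLinearMap.isPositive_iff_complex]
  intro x
  obtain ⟨hre, him⟩ := Complex.nonneg_iff.1 (hT x)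
  rw [← inner_conj_symm, Complex.conj_eq_iff_im.2 him.symm]
  exact ⟨Complex.conj_eq_iff_re.1 (Complex.conj_eq_iff_im.2 him.symm), hre⟩

variable [CompleteSpace K]

theorem exists_eq_star_mul_self_iff_inner_nonneg {T : 𝓑(K)} :
    (∃ S, T = star S * S) ↔ ∀ x, 0 ≤ ⟪x, T x⟫_ℂ :=
  CStarAlgebra.nonneg_iff_eq_star_mul_self.symm.trans clm_nonneg_iff_inner_nonneg

theorem matPos_iff_inner_nonneg {M : Matrix ν ν 𝓑(K)} :
    MatPos M ↔ ∀ ξ : ν → K, 0 ≤ ∑ p, ∑ q, ⟪ξ p, M p q (ξ q)⟫_ℂ := by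
  calc MatPos M ↔ ∃ N, matOp M = star (matOp N) * matOp N := by
        simp only [MatPos, ← matOp_conjTranspose, ← matOp_mul, matOp_injective.eq_iff]
    _ ↔ ∃ S, matOp M = star S * S := (matOp_surjective.exists (p := fun S => _ = star S * S)).symm
    _ ↔ ∀ x, 0 ≤ ⟪x, matOp M x⟫_ℂ := exists_eq_star_mul_self_iff_inner_nonneg
    _ ↔ _ := by
        simp only [inner_matOp]
        exact ⟨fun h ξ => h (WithLp.toLp 2 ξ), fun h x => h x⟩

theorem matPos_conjTranspose_mul_self (N : Matrix κ ν 𝓑(K)) : MatPos (Nᴴ * N) := by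
  refine matPos_iff_inner_nonneg.2 fun ξ => ?_
  have sum_eq : ∑ p, ∑ q, ⟪ξ p, (Nᴴ * N) p q (ξ q)⟫_ℂ
      = ∑ k, ⟪∑ p, N k p (ξ p), ∑ q, N k q (ξ q)⟫_ℂ := by
    simp only [mul_apply, conjTranspose_apply, _root_.sum_apply, inner_sum, sum_inner,
      mul_apply_eq_comp, ContinuousLinearMap.star_eq_adjoint,
      ContinuousLinearMap.adjoint_inner_right]
    rw [Finset.sum_comm_cycle]
    exact Finset.sum_congr rfl fun k _ => Finset.sum_comm
  rw [sum_eq]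
  refine Finset.sum_nonneg fun k _ => ?_
  exact (ContinuousLinearMap.isPositive_one (𝕜 := ℂ) (E := K)).inner_nonneg_right _

theorem MatPos.submatrix {M : Matrix ν ν 𝓑(K)} (hM : MatPos M) (f : κ → ν) :
    MatPos (M.submatrix f f) := by
  obtain ⟨N, rfl⟩ := hM
  exact matPos_conjTranspose_mul_self (N.submatrix id f)

theorem MatPos.add {M N : Matrix ν ν 𝓑(K)} (hM : MatPos M) (hN : MatPos N) : MatPos (M + N) := by
  rw [matPos_iff_inner_nonneg] at *
  intro ξ
  simpa [Finset.sum_add_distrib, inner_add_right] using add_nonneg (hM ξ) (hN ξ)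

theorem MatPos.posSemidef_inner {M : Matrix ν ν 𝓑(K)} (hM : MatPos M) (ξ : K) :
    (M.map fun T => ⟪ξ, T ξ⟫_ℂ).PosSemidef := by
  refine PosSemidef.of_dotProduct_mulVec_nonneg ?_ fun z => ?_
  · ext p q
    rw [conjTranspose_apply, map_apply, map_apply, ← hM.star_apply p q]
    simp [ContinuousLinearMap.star_eq_adjoint, ContinuousLinearMap.adjoint_inner_right]
  · have := matPos_iff_inner_nonneg.1 hM fun p => z p • ξ
    simpa [dotProduct, mulVec, Finset.mul_sum, inner_smul_left, inner_smul_right, mul_assoc,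
      mul_left_comm, mul_comm (starRingEnd ℂ _) (z _)] using this

open scoped MatrixOrder in
theorem matPos_map_smul {C : Matrix ν ν ℂ} (hC : C.PosSemidef) {d : 𝓑(K)} (hd : 0 ≤ d) :
    MatPos (C.map fun c => c • d) := by
  classical
  obtain ⟨B, rfl⟩ := CStarAlgebra.nonneg_iff_eq_star_mul_self.1 hC.nonneg
  obtain ⟨s, rfl⟩ := CStarAlgebra.nonneg_iff_eq_star_mul_self.1 hd
  refine ⟨B.map fun b => b • s, ?_⟩
  ext1 p q
  simp [mul_apply, Finset.sum_smul, smul_smul, mul_comm]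

end Positivity

section Blocks

variable {ν : Type*} [Fintype ν]
variable {K : Type*} [NormedAddCommGroup K] [InnerProductSpace ℂ K]

theorem sum_inner_fromBlocks (P X Y Q : Matrix ν ν 𝓑(K)) (x y : PiLp 2 fun _ : ν => K) :
    ∑ p, ∑ q, ⟪(Sum.elim x y : ν ⊕ ν → K) p, fromBlocks P X Y Q p q (Sum.elim x y q)⟫_ℂ
      = ⟪x, matOp P x⟫_ℂ + ⟪x, matOp X y⟫_ℂ + (⟪y, matOp Y x⟫_ℂ + ⟪y, matOp Q y⟫_ℂ) := by
  simp only [Fintype.sum_sum_type, fromBlocks_apply₁₁, fromBlocks_apply₁₂, fromBlocks_apply₂₁,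
    fromBlocks_apply₂₂, Finset.sum_add_distrib, Sum.elim_inl, Sum.elim_inr, inner_matOp]
  exact add_add_add_comm _ _ _ _

theorem norm_inner_clm_le (T : 𝓑(K)) (x y : K) : ‖⟪x, T y⟫_ℂ‖ ≤ ‖T‖ * (‖x‖ * ‖y‖) :=
  calc ‖⟪x, T y⟫_ℂ‖ ≤ ‖x‖ * ‖T y‖ := norm_inner_le_norm _ _
    _ ≤ ‖x‖ * (‖T‖ * ‖y‖) := by gcongr; exact T.le_opNorm y
    _ = ‖T‖ * (‖x‖ * ‖y‖) := by ring

variable [CompleteSpace K]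

theorem inner_matOp_conjTranspose (M : Matrix ν ν 𝓑(K)) (x y : PiLp 2 fun _ : ν => K) :
    ⟪y, matOp Mᴴ x⟫_ℂ = starRingEnd ℂ ⟪x, matOp M y⟫_ℂ := by
  rw [matOp_conjTranspose, ContinuousLinearMap.star_eq_adjoint,
    ContinuousLinearMap.adjoint_inner_right, inner_conj_symm]

theorem matPos_fromBlocks_norm [DecidableEq ν] (M : Matrix ν ν 𝓑(K)) :
    MatPos (fromBlocks (diagonal fun _ => (‖matOp M‖ : ℂ) • 1) M Mᴴ
      (diagonal fun _ => (‖matOp M‖ : ℂ) • 1)) := by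
  refine matPos_iff_inner_nonneg.2 fun ξ => ?_
  obtain ⟨x, y, rfl⟩ : ∃ x y : PiLp 2 fun _ : ν => K, ξ = Sum.elim x y :=
    ⟨WithLp.toLp 2 (ξ ∘ Sum.inl), WithLp.toLp 2 (ξ ∘ Sum.inr), (Sum.elim_comp_inl_inr ξ).symm⟩
  have scalar (z : PiLp 2 fun _ : ν => K) :
      ⟪z, matOp (diagonal fun _ => (‖matOp M‖ : ℂ) • 1) z⟫_ℂ = ((‖matOp M‖ * ‖z‖ ^ 2 : ℝ) : ℂ) := by
    have : matOp (diagonal fun _ => (‖matOp M‖ : ℂ) • 1) z = (‖matOp M‖ : ℂ) • z := by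
      ext i
      simp [matOp_diagonal_apply]
    rw [this, inner_smul_right, inner_self_eq_norm_sq_to_K]
    push_cast
    rfl
  have cross : -(‖matOp M‖ * (‖x‖ * ‖y‖)) ≤ (⟪x, matOp M y⟫_ℂ).re :=
    (abs_le.1 ((Complex.abs_re_le_norm _).trans (norm_inner_clm_le _ x y))).1
  rw [sum_inner_fromBlocks, inner_matOp_conjTranspose, scalar, scalar,
    add_assoc, ← add_assoc ⟪x, matOp M y⟫_ℂ, Complex.add_conj]
  norm_cast
  nlinarith [mul_nonneg (norm_nonneg (matOp M)) (sq_nonneg (‖x‖ - ‖y‖))]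

theorem norm_matOp_le_of_matPos_fromBlocks {P X Y Q : Matrix ν ν 𝓑(K)} {c : ℝ}
    (h : MatPos (fromBlocks P X Y Q)) (hP : ‖matOp P‖ ≤ c) (hQ : ‖matOp Q‖ ≤ c) :
    ‖matOp X‖ ≤ c := by
  refine ContinuousLinearMap.opNorm_le_of_re_inner_le ((norm_nonneg _).trans hP) fun y x hy hx => ?_
  obtain rfl : Y = Xᴴ := by
    ext1 p q
    simpa using (h.star_apply (.inl q) (.inr p)).symm
  have diag {D : Matrix ν ν 𝓑(K)} (hD : ‖matOp D‖ ≤ c) {z : PiLp 2 fun _ : ν => K}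
      (hz : ‖z‖ = 1) : (⟪z, matOp D z⟫_ℂ).re ≤ c :=
    (Complex.re_le_norm _).trans ((norm_inner_clm_le _ z z).trans (by simpa [hz] using hD))
  have form := (Complex.nonneg_iff.1 (matPos_iff_inner_nonneg.1 h (Sum.elim x (-y)))).1
  have := sum_inner_fromBlocks P X Xᴴ Q x (-y)
  simp only [WithLp.ofLp_neg] at this
  rw [this, inner_matOp_conjTranspose] at form
  simp only [map_neg, inner_neg_right, inner_neg_left, neg_neg, Complex.add_re, Complex.neg_re,
    Complex.conj_re] at form
  have hre : RCLike.re ⟪matOp X y, x⟫_ℂ = (⟪x, matOp X y⟫_ℂ).re := inner_re_symm _ _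
  linarith [diag hP hx, diag hQ hy]

end Blocks

section Amplification

variable {A : Type*} [NonUnitalCStarAlgebra A] {ν : Type*} [Fintype ν]
variable {K L : Type*} [NormedAddCommGroup K] [InnerProductSpace ℂ K] [CompleteSpace K]
  [NormedAddCommGroup L] [InnerProductSpace ℂ L] [CompleteSpace L]

/-- The amplification of a representation of `A` on `K` to matrices over `A`, acting on the
Hilbert space direct sum of copies of `K`. -/
def matAmplification (ρ : A →⋆ₙₐ[ℂ] 𝓑(K)) :
    CStarMatrix ν ν A →⋆ₙₐ[ℂ] 𝓑(PiLp 2 fun _ : ν => K) where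
  toFun M := matOp (of fun i j => ρ (M i j))
  map_smul' c M := by
    rw [← matOp_smul]
    congr
    ext1
    simp
  map_zero' := by
    ext
    simp [matOp_apply]
  map_add' M N := by
    rw [← matOp_add]
    congr
    ext1
    simp
  map_mul' M N := by
    rw [← matOp_mul]
    congr
    ext1
    simp [CStarMatrix.mul_apply, mul_apply]
  map_star' M := by
    rw [← matOp_conjTranspose]
    congr
    ext1
    simp [CStarMatrix.star_apply, map_star]

theorem matAmplification_injective {ρ : A →⋆ₙₐ[ℂ] 𝓑(K)} (hρ : Function.Injective ρ) :
    Function.Injective (matAmplification (ν := ν) ρ) := fun M N h => by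
  ext i j
  exact hρ (congrFun₂ (matOp_injective h) i j)

theorem norm_matOp_map_le_of_injective {ρ : A →⋆ₙₐ[ℂ] 𝓑(K)} (hρ : Function.Injective ρ)
    (σ : A →⋆ₙₐ[ℂ] 𝓑(L)) (M : Matrix ν ν A) : ‖matOp (M.map σ)‖ ≤ ‖matOp (M.map ρ)‖ := by
  let := CStarAlgebra.spectralOrder A
  have := CStarAlgebra.spectralOrderedRing A
  calc ‖matOp (M.map σ)‖ ≤ ‖CStarMatrix.ofMatrix M‖ :=
        NonUnitalStarAlgHom.norm_apply_le (matAmplification σ) (CStarMatrix.ofMatrix M)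
    _ = ‖matOp (M.map ρ)‖ := (NonUnitalStarAlgHom.norm_map (matAmplification ρ)
        (matAmplification_injective hρ) (CStarMatrix.ofMatrix M)).symm

end Amplification

section CompletelyPositive

variable {K L : Type*} [NormedAddCommGroup K] [InnerProductSpace ℂ K] [CompleteSpace K]
  [NormedAddCommGroup L] [InnerProductSpace ℂ L]

/-- The positive functional `T ↦ ⟪ξ, T ξ⟫` on the operators on `L`. -/
def vectorFunctional (ξ : L) : 𝓑(L) →ₗ[ℂ] ℂ :=
  (innerₛₗ ℂ ξ) ∘ₗ (ContinuousLinearMap.apply ℂ L ξ).toLinearMap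

@[simp]
theorem vectorFunctional_apply (ξ : L) (T : 𝓑(L)) : vectorFunctional ξ T = ⟪ξ, T ξ⟫_ℂ := rfl

theorem norm_conj_le {R : Type*} [SeminormedRing R] {p : R} (hp : ‖p‖ ≤ 1) (x : R) :
    ‖p * x * p‖ ≤ ‖x‖ :=
  calc ‖p * x * p‖ ≤ ‖p‖ * ‖x‖ * ‖p‖ := (norm_mul_le _ _).trans (by gcongr; exact norm_mul_le _ _)
    _ ≤ 1 * ‖x‖ * 1 := by gcongr
    _ = ‖x‖ := by ring

/-- The filter `l` is an approximate unit of `D` consisting of self-adjoint contractions. It is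
required to act on both sides at once, `e x e → x`, because compression by `e` preserves positivity
of operator matrices. -/
structure IsSelfAdjointApproxUnit (D : NonUnitalStarSubalgebra ℂ 𝓑(K)) (l : Filter 𝓑(K)) :
    Prop where
  mem : ∀ᶠ e in l, e ∈ D
  isSelfAdjoint : ∀ᶠ e in l, IsSelfAdjoint e
  norm_le_one : ∀ᶠ e in l, ‖e‖ ≤ 1
  tendsto : ∀ x ∈ D, Tendsto (fun e => e * x * e) l (𝓝 x)

theorem IsSelfAdjointApproxUnit.topologicalClosure {D : NonUnitalStarSubalgebra ℂ 𝓑(K)}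
    {l : Filter 𝓑(K)} (hl : IsSelfAdjointApproxUnit D l) :
    IsSelfAdjointApproxUnit D.topologicalClosure l where
  mem := hl.mem.mono fun _ he => D.le_topologicalClosure he
  isSelfAdjoint := hl.isSelfAdjoint
  norm_le_one := hl.norm_le_one
  tendsto x hx := by
    refine Metric.tendsto_nhds.2 fun ε hε => ?_
    obtain ⟨y, hyD, hxy⟩ := Metric.mem_closure_iff.1 hx (ε / 3) (by positivity)
    have hy := Metric.tendsto_nhds.1 (hl.tendsto y hyD) (ε / 3) (by positivity)
    filter_upwards [hl.norm_le_one, hy] with e he hey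
    have hxye : dist (e * x * e) (e * y * e) ≤ dist x y := by
      rw [dist_eq_norm, dist_eq_norm, ← sub_mul, ← mul_sub]
      exact norm_conj_le he _
    linarith [dist_triangle4 (e * x * e) (e * y * e) y x, dist_comm x y]

theorem IsSelfAdjointApproxUnit.tendsto_map {B : NonUnitalStarSubalgebra ℂ 𝓑(K)}
    {Φ : 𝓑(K) →ₗ[ℂ] 𝓑(L)} {l : Filter 𝓑(K)} (hl : IsSelfAdjointApproxUnit B l) {C : ℝ}
    (hC : ∀ x ∈ B, ‖Φ x‖ ≤ C * ‖x‖) {x : 𝓑(K)} (hx : x ∈ B) :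
    Tendsto (fun e => Φ (e * x * e)) l (𝓝 (Φ x)) := by
  have lim := hl.tendsto x hx
  rw [tendsto_iff_norm_sub_tendsto_zero] at lim ⊢
  refine squeeze_zero' (.of_forall fun _ => norm_nonneg _) ?_ (by simpa using lim.const_mul C)
  filter_upwards [hl.mem] with e he
  rw [← map_sub]
  exact hC _ (sub_mem (mul_mem (mul_mem he hx) he) hx)

variable [CompleteSpace L]

/-- Complete positivity of `Φ` on matrices with entries in `S`. Positivity of a matrix is that of
the ambient operator algebra, and `Φ` is allowed to be arbitrary outside `S`. -/
def IsCPOn (S : Set 𝓑(K)) (Φ : 𝓑(K) →ₗ[ℂ] 𝓑(L)) : Prop :=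
  ∀ (n : ℕ) (M : Matrix (Fin n) (Fin n) 𝓑(K)),
    (∀ i j, M i j ∈ S) → MatPos M → MatPos (M.map Φ)

namespace IsCPOn

variable {S : Set 𝓑(K)} {Φ Ψ : 𝓑(K) →ₗ[ℂ] 𝓑(L)}

theorem matPos_map (hΦ : IsCPOn S Φ) {ν : Type*} [Fintype ν] {M : Matrix ν ν 𝓑(K)}
    (hMS : ∀ i j, M i j ∈ S) (hM : MatPos M) : MatPos (M.map Φ) := by
  let e := Fintype.equivFin ν
  have := (hΦ _ (M.submatrix e.symm e.symm) (fun _ _ => hMS _ _) (hM.submatrix e.symm)).submatrix e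
  simpa only [← submatrix_map, submatrix_submatrix, e.symm_comp_self, submatrix_id_id] using this

theorem congr (hΦ : IsCPOn S Φ) (h : ∀ x ∈ S, Ψ x = Φ x) : IsCPOn S Ψ := fun n M hMS hM => by
  have : M.map Ψ = M.map Φ := Matrix.ext fun i j => h _ (hMS i j)
  exact this ▸ hΦ n M hMS hM

theorem zero : IsCPOn S (0 : 𝓑(K) →ₗ[ℂ] 𝓑(L)) := fun _ _ _ _ =>
  ⟨0, by ext; simp⟩

theorem add (hΦ : IsCPOn S Φ) (hΨ : IsCPOn S Ψ) : IsCPOn S (Φ + Ψ) := fun n M hMS hM =>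
  (hΦ n M hMS hM).add (hΨ n M hMS hM)

theorem sum {J : Type*} {s : Finset J} {Φ : J → 𝓑(K) →ₗ[ℂ] 𝓑(L)}
    (hΦ : ∀ j ∈ s, IsCPOn S (Φ j)) : IsCPOn S (∑ j ∈ s, Φ j) :=
  Finset.sum_induction _ _ (fun _ _ => add) zero hΦ

theorem conj (hΦ : IsCPOn S Φ) (P : 𝓑(L)) :
    IsCPOn S (LinearMap.mulLeftRight ℂ (star P, P) ∘ₗ Φ) := fun n M hMS hM => by
  simpa [LinearMap.mulLeftRight_apply] using! (hΦ n M hMS hM).conj_diagonal fun _ => P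

theorem smul (hΦ : IsCPOn S Φ) {r : ℝ} (hr : 0 ≤ r) : IsCPOn S (r • Φ) := by
  refine (hΦ.conj ((√r : ℂ) • 1)).congr fun x _ => ?_
  simp [LinearMap.mulLeftRight_apply, smul_smul, Real.mul_self_sqrt hr]

theorem vectorFunctional_smulRight (hΦ : IsCPOn S Φ) (ξ : L) {d : 𝓑(L)} (hd : 0 ≤ d) :
    IsCPOn S ((vectorFunctional ξ ∘ₗ Φ).smulRight d) := fun n M hMS hM => by
  simpa using! matPos_map_smul ((hΦ n M hMS hM).posSemidef_inner ξ) hd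

end IsCPOn

section ApproxUnit

variable {B : NonUnitalStarSubalgebra ℂ 𝓑(K)} {Φ : 𝓑(K) →ₗ[ℂ] 𝓑(L)} {l : Filter 𝓑(K)}

theorem IsCPOn.matPos_fromBlocks_compress (hΦ : IsCPOn (B : Set 𝓑(K)) Φ) {ν : Type*} [Fintype ν]
    [DecidableEq ν] {M : Matrix ν ν 𝓑(K)} (hM : ∀ i j, M i j ∈ B) {e : 𝓑(K)} (heB : e ∈ B)
    (he : IsSelfAdjoint e) :
    MatPos (fromBlocks (diagonal fun _ => (‖matOp M‖ : ℂ) • Φ (e * e))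
      (of fun p q => Φ (e * M p q * e)) (of fun p q => Φ (e * star (M q p) * e))
      (diagonal fun _ => (‖matOp M‖ : ℂ) • Φ (e * e))) := by
  let N := fromBlocks (diagonal fun _ => (‖matOp M‖ : ℂ) • (e * e)) (of fun p q => e * M p q * e)
    (of fun p q => e * star (M q p) * e) (diagonal fun _ => (‖matOp M‖ : ℂ) • (e * e))
  have hN : MatPos N := by
    convert (matPos_fromBlocks_norm M).conj_diagonal fun _ => e using 1
    ext1 (p | p) (q | q) <;> by_cases hpq : p = q <;> simp [N, he.star_eq, hpq]
  have hNB : ∀ p q, N p q ∈ B := by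
    have hee : (‖matOp M‖ : ℂ) • (e * e) ∈ B := SMulMemClass.smul_mem _ (mul_mem heB heB)
    have hconj {x} (hx : x ∈ B) : e * x * e ∈ B := mul_mem (mul_mem heB hx) heB
    have hdiag (p q : ν) : diagonal (fun _ => (‖matOp M‖ : ℂ) • (e * e)) p q ∈ B := by
      rw [diagonal_apply]
      split_ifs
      exacts [hee, zero_mem B]
    rintro (p | p) (q | q)
    exacts [hdiag p q, hconj (hM p q), hconj (star_mem (hM q p)), hdiag p q]
  convert hΦ.matPos_map hNB hN using 1
  ext1 (p | p) (q | q) <;> by_cases hpq : p = q <;> simp [N, hpq]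

variable [l.NeBot]

theorem IsCPOn.norm_matOp_map_le (hΦ : IsCPOn (B : Set 𝓑(K)) Φ)
    (hl : IsSelfAdjointApproxUnit B l) {C : ℝ} (hC : ∀ x ∈ B, ‖Φ x‖ ≤ C * ‖x‖) {c : ℝ}
    (hc : ∀ᶠ e in l, ‖Φ (e * e)‖ ≤ c) {ν : Type*} [Fintype ν] {M : Matrix ν ν 𝓑(K)}
    (hM : ∀ i j, M i j ∈ B) : ‖matOp (M.map Φ)‖ ≤ c * ‖matOp M‖ := by
  classical
  have hc0 : 0 ≤ c := hc.exists.elim fun e he => (norm_nonneg _).trans he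
  refine ContinuousLinearMap.opNorm_le_of_re_inner_le (by positivity) fun y x hy hx => ?_
  have lim : Tendsto (fun e => ⟪x, matOp (of fun p q => Φ (e * M p q * e)) y⟫_ℂ) l
      (𝓝 ⟪x, matOp (M.map Φ) y⟫_ℂ) := by
    simp only [inner_matOp, of_apply, map_apply]
    refine tendsto_finsetSum _ fun p _ => tendsto_finsetSum _ fun q _ => ?_
    have : Continuous fun T : 𝓑(L) => ⟪x p, T (y q)⟫_ℂ := by fun_prop
    exact (this.tendsto _).comp (hl.tendsto_map hC (hM p q))
  rw [← inner_re_symm]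
  refine (Complex.re_le_norm _).trans (le_of_tendsto lim.norm ?_)
  filter_upwards [hl.mem, hl.isSelfAdjoint, hc] with e heB he hce
  have hdiag : ‖matOp (diagonal fun _ : ν => (‖matOp M‖ : ℂ) • Φ (e * e))‖ ≤ c * ‖matOp M‖ := by
    refine (norm_matOp_diagonal_le _).trans ?_
    rw [norm_smul, Complex.norm_real, norm_norm, mul_comm]
    gcongr
  refine (norm_inner_clm_le _ x y).trans ?_
  rw [hx, hy, mul_one, mul_one]
  exact norm_matOp_le_of_matPos_fromBlocks (hΦ.matPos_fromBlocks_compress hM heB he) hdiag hdiag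

theorem IsCPOn.norm_matOp_map_le_of_norm_le (hΦ : IsCPOn (B : Set 𝓑(K)) Φ)
    (hl : IsSelfAdjointApproxUnit B l) {C : ℝ} (hC0 : 0 ≤ C) (hC : ∀ x ∈ B, ‖Φ x‖ ≤ C * ‖x‖)
    {ν : Type*} [Fintype ν] {M : Matrix ν ν 𝓑(K)} (hM : ∀ i j, M i j ∈ B) :
    ‖matOp (M.map Φ)‖ ≤ C * ‖matOp M‖ := by
  refine hΦ.norm_matOp_map_le hl hC ?_ hM
  filter_upwards [hl.mem, hl.norm_le_one] with e heB he
  calc ‖Φ (e * e)‖ ≤ C * ‖e * e‖ := hC _ (mul_mem heB heB)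
    _ ≤ C * (‖e‖ * ‖e‖) := by gcongr; exact norm_mul_le e e
    _ ≤ C := mul_le_of_le_one_right hC0 (mul_le_one₀ he (norm_nonneg e) he)

theorem IsCPOn.map_star (hΦ : IsCPOn (B : Set 𝓑(K)) Φ) (hl : IsSelfAdjointApproxUnit B l) {C : ℝ}
    (hC : ∀ x ∈ B, ‖Φ x‖ ≤ C * ‖x‖) {x : 𝓑(K)} (hx : x ∈ B) : Φ (star x) = star (Φ x) := by
  refine tendsto_nhds_unique (hl.tendsto_map hC (star_mem hx))
    ((hl.tendsto_map hC hx).star.congr' ?_)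
  filter_upwards [hl.mem, hl.isSelfAdjoint] with e heB he
  have := hΦ.matPos_fromBlocks_compress (M := of fun _ _ : Unit => x) (fun _ _ => hx) heB he
  simpa using this.star_apply (.inl ()) (.inr ())

end ApproxUnit

end CompletelyPositive

section DualFamily

variable {𝕜 V X : Type*} [Field 𝕜] [AddCommGroup V] [Module 𝕜 V] [FiniteDimensional 𝕜 V]

theorem exists_finset_separating {φ : X → Module.Dual 𝕜 V} (hφ : ∀ v ≠ 0, ∃ x, φ x v ≠ 0) :
    ∃ t : Finset X, ∀ v, (∀ x ∈ t, φ x v = 0) → v = 0 := by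
  classical
  have hspan : Submodule.span 𝕜 (φ '' Set.univ) = ⊤ :=
    Submodule.span_eq_top_of_ne_zero fun v hv => by simpa using hφ v hv
  obtain ⟨s, hs, hst⟩ := (Submodule.fg_span_iff_fg_span_finset_subset _).1
    (IsNoetherian.noetherian (Submodule.span 𝕜 (φ '' Set.univ)))
  obtain ⟨t, -, rfl⟩ := Finset.subset_set_image_iff.1 hs
  refine ⟨t, fun v hv => (Module.forall_dual_apply_eq_zero_iff 𝕜 v).1 fun f => ?_⟩
  have hf : f ∈ Submodule.span 𝕜 (t.image φ : Set (Module.Dual 𝕜 V)) := hst ▸ hspan ▸ trivial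
  have hle : Submodule.span 𝕜 (t.image φ : Set (Module.Dual 𝕜 V)) ≤
      LinearMap.ker (Module.Dual.eval 𝕜 V v) := by
    simpa [Submodule.span_le, Set.subset_def] using hv
  exact hle hf

theorem exists_dual_family {φ : X → Module.Dual 𝕜 V} (hφ : ∀ v ≠ 0, ∃ x, φ x v ≠ 0) :
    ∃ (t : Finset X) (w : X → V), ∀ v, ∑ x ∈ t, φ x v • w x = v := by
  classical
  obtain ⟨t, ht⟩ := exists_finset_separating hφ
  obtain ⟨g, hg⟩ := (LinearMap.pi fun x : t => φ x).exists_leftInverse_of_injective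
    (LinearMap.ker_eq_bot'.2 fun v hv => ht v fun x hx => congrFun hv ⟨x, hx⟩)
  refine ⟨t, fun x => if hx : x ∈ t then g (Pi.single ⟨x, hx⟩ 1) else 0, fun v => ?_⟩
  calc ∑ x ∈ t, φ x v • (if hx : x ∈ t then g (Pi.single ⟨x, hx⟩ 1) else 0)
      = ∑ x : t, φ x v • g (Pi.single x 1) := by
        rw [← Finset.sum_coe_sort]
        exact Finset.sum_congr rfl fun x _ => by rw [dif_pos x.2]
    _ = g (LinearMap.pi (fun x : t => φ x) v) := by
        rw [LinearMap.pi_apply_eq_sum_univ g]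
        refine Finset.sum_congr rfl fun x _ => congrArg (φ x v • g ·) (funext fun y => ?_)
        simp only [Pi.single_apply, eq_comm]
    _ = v := LinearMap.congr_fun hg v

end DualFamily

section Perturbation

theorem norm_inv_one_add_smul_le {E : Type*} [NormedAddCommGroup E] [NormedSpace ℝ E] {x y : E}
    {δ r : ℝ} (hδ : 0 < δ) (hy : ‖y‖ ≤ r) (hxy : ‖x - y‖ ≤ δ * r) :
    ‖(1 + δ)⁻¹ • x‖ ≤ r ∧ ‖(1 + δ)⁻¹ • x - y‖ ≤ 2 * δ * r := by
  have hpos : 0 < 1 + δ := by positivity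
  constructor
  · rw [norm_smul, Real.norm_of_nonneg (by positivity), inv_mul_le_iff₀ hpos]
    linarith [norm_le_norm_add_norm_sub' x y]
  · calc ‖(1 + δ)⁻¹ • x - y‖ = ‖(1 + δ)⁻¹ • ((x - y) - δ • y)‖ := by
          rw [sub_sub, show y + δ • y = (1 + δ) • y by module, smul_sub, smul_smul,
            inv_mul_cancel₀ hpos.ne', one_smul]
      _ ≤ ‖(x - y) - δ • y‖ := by
          rw [norm_smul, Real.norm_of_nonneg (by positivity)]
          exact mul_le_of_le_one_left (norm_nonneg _) (inv_le_one_of_one_le₀ (by linarith))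
      _ ≤ ‖x - y‖ + δ * ‖y‖ := (norm_sub_le _ _).trans_eq (by
          rw [norm_smul, Real.norm_of_nonneg hδ.le])
      _ ≤ 2 * δ * r := by nlinarith

variable {K : Type*} [NormedAddCommGroup K] [InnerProductSpace ℂ K]

theorem exists_sum_vectorFunctional_smul_eq (V : Submodule ℂ 𝓑(K)) [FiniteDimensional ℂ V] :
    ∃ (t : Finset K) (w : K → 𝓑(K)), (∀ ξ, w ξ ∈ V) ∧
      ∀ T ∈ V, ∑ ξ ∈ t, vectorFunctional ξ T • w ξ = T := by
  have separating (T : V) (hT : T ≠ 0) : ∃ ξ, (vectorFunctional ξ ∘ₗ V.subtype) T ≠ 0 := by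
    contrapose! hT
    have : (T : K →ₗ[ℂ] K) = 0 :=
      (inner_map_self_eq_zero _).1 fun ξ => inner_eq_zero_symm.1 (hT ξ)
    ext ξ
    exact LinearMap.congr_fun this ξ
  obtain ⟨t, w, hw⟩ := exists_dual_family separating
  refine ⟨t, fun ξ => w ξ, fun ξ => (w ξ).2, fun T hT => ?_⟩
  simpa using congrArg Subtype.val (hw ⟨T, hT⟩)

theorem norm_sum_vectorFunctional_smul_sub_le (T : 𝓑(K)) {t : Finset K} {y w : K → 𝓑(K)} {ε : ℝ}
    (h : ∀ ξ ∈ t, ‖y ξ - w ξ‖ ≤ ε) :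
    ‖∑ ξ ∈ t, vectorFunctional ξ T • y ξ - ∑ ξ ∈ t, vectorFunctional ξ T • w ξ‖
      ≤ (∑ ξ ∈ t, ‖ξ‖ ^ 2) * ε * ‖T‖ := by
  rw [← Finset.sum_sub_distrib, Finset.sum_mul, Finset.sum_mul]
  refine norm_sum_le_of_le _ fun ξ hξ => ?_
  rw [← smul_sub, norm_smul, vectorFunctional_apply]
  calc ‖⟪ξ, T ξ⟫_ℂ‖ * ‖y ξ - w ξ‖ ≤ ‖T‖ * (‖ξ‖ * ‖ξ‖) * ε := by
        gcongr
        exacts [norm_inner_clm_le T ξ ξ, h ξ hξ]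
    _ = ‖ξ‖ ^ 2 * ε * ‖T‖ := by ring

variable [CompleteSpace K]

theorem vectorFunctional_star (ξ : K) (T : 𝓑(K)) :
    vectorFunctional ξ (star T) = star (vectorFunctional ξ T) := by
  simp [ContinuousLinearMap.star_eq_adjoint, ContinuousLinearMap.adjoint_inner_right]

open ComplexStarModule

theorem realPart_mem {B : NonUnitalStarSubalgebra ℂ 𝓑(K)} {x : 𝓑(K)} (hx : x ∈ B) :
    (ℜ x : 𝓑(K)) ∈ B := by
  rw [realPart_apply_coe, ← Complex.coe_smul]
  exact SMulMemClass.smul_mem _ (add_mem hx (star_mem hx))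

theorem exists_isSelfAdjoint_sum_vectorFunctional_smul_eq {B : NonUnitalStarSubalgebra ℂ 𝓑(K)}
    {Φ : 𝓑(K) →ₗ[ℂ] 𝓑(K)} (hB : ∀ x ∈ B, Φ x ∈ B)
    (hstar : ∀ x ∈ B, Φ (star x) = star (Φ x))
    (hfd : FiniteDimensional ℂ (Submodule.span ℂ (Φ '' B))) :
    ∃ (t : Finset K) (w : K → 𝓑(K)), (∀ ξ, w ξ ∈ B ∧ IsSelfAdjoint (w ξ)) ∧
      ∀ x ∈ B, ∑ ξ ∈ t, vectorFunctional ξ (Φ x) • w ξ = Φ x := by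
  obtain ⟨t, w, hw, hdecomp⟩ := exists_sum_vectorFunctional_smul_eq (Submodule.span ℂ (Φ '' B))
  replace hdecomp x (hx : x ∈ B) : ∑ ξ ∈ t, vectorFunctional ξ (Φ x) • w ξ = Φ x :=
    hdecomp _ (Submodule.subset_span ⟨x, hx, rfl⟩)
  have hdecomp_star x (hx : x ∈ B) : ∑ ξ ∈ t, vectorFunctional ξ (Φ x) • star (w ξ) = Φ x := by
    rw [← star_inj, ← hstar x hx, ← hdecomp _ (star_mem hx), star_sum]
    simp [hstar x hx, -vectorFunctional_apply, vectorFunctional_star]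
  have hwB ξ : w ξ ∈ B :=
    (Submodule.span_le (p := B.toSubmodule)).2 (Set.image_subset_iff.2 hB) (hw ξ)
  refine ⟨t, fun ξ => ℜ (w ξ), fun ξ => ⟨?_, (ℜ (w ξ)).2⟩, fun x hx => ?_⟩
  · exact realPart_mem (hwB ξ)
  · simp only [realPart_apply_coe, smul_comm _ (2 : ℝ)⁻¹, smul_add, Finset.sum_add_distrib,
      ← Finset.smul_sum, hdecomp x hx, hdecomp_star x hx]
    module

theorem exists_isSelfAdjoint_norm_sub_le {D : NonUnitalStarSubalgebra ℂ 𝓑(K)} {w : 𝓑(K)}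
    (hwD : w ∈ D.topologicalClosure) (hw : IsSelfAdjoint w) {ε : ℝ} (hε : 0 < ε) :
    ∃ u ∈ D, IsSelfAdjoint u ∧ ‖u - w‖ ≤ ε := by
  obtain ⟨v, hv, hvw⟩ := Metric.mem_closure_iff.1 hwD ε hε
  refine ⟨ℜ v, realPart_mem hv, (ℜ v).2, ?_⟩
  calc ‖(ℜ v : 𝓑(K)) - w‖ = ‖ℜ (v - w)‖ := by
        rw [map_sub, ← AddSubgroup.norm_coe, AddSubgroupClass.coe_sub, hw.coe_realPart]
    _ ≤ ‖v - w‖ := realPart.norm_le _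
    _ ≤ ε := by rw [← dist_eq_norm, dist_comm]; exact hvw.le

-- Substituting `P (w + d) P` for `w` in `x ↦ φ(x) w`, with `φ` a positive functional, keeps
-- complete positivity, since `d ≥ 0` only adds a completely positive map and compression by `P` is
-- harmless. The shift by `ε` makes `d` positive, and `P` brings the shifted unit back into `D`.
theorem exists_nonneg_add_conj_mem {D : NonUnitalStarSubalgebra ℂ 𝓑(K)} {w P : 𝓑(K)} {ε : ℝ}
    (hε : 0 < ε) (hwD : w ∈ D.topologicalClosure) (hw : IsSelfAdjoint w) (hPD : P ∈ D)
    (hP : ‖P‖ ≤ 1) (hPw : ‖P * w * P - w‖ ≤ ε) :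
    ∃ d, 0 ≤ d ∧ P * (w + d) * P ∈ D ∧ ‖P * (w + d) * P - w‖ ≤ 3 * ε := by
  obtain ⟨u, huD, hu, huw⟩ := exists_isSelfAdjoint_norm_sub_le hwD hw hε
  have hone : P * (u + (ε : ℂ) • 1) * P = P * u * P + (ε : ℂ) • (P * P) := by
    simp [mul_add, add_mul]
  refine ⟨u - w + (ε : ℂ) • 1, ?_, ?_, ?_⟩
  · calc 0 ≤ u - w + algebraMap ℝ 𝓑(K) ‖u - w‖ :=
          neg_le_iff_add_nonneg.1 (hu.sub hw).neg_algebraMap_norm_le_self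
      _ ≤ u - w + algebraMap ℝ 𝓑(K) ε := by gcongr
      _ = u - w + (ε : ℂ) • 1 := by rw [Algebra.algebraMap_eq_smul_one, Complex.coe_smul]
  · rw [← add_assoc, add_sub_cancel, hone]
    exact add_mem (mul_mem (mul_mem hPD huD) hPD) (SMulMemClass.smul_mem _ (mul_mem hPD hPD))
  · calc ‖P * (w + (u - w + (ε : ℂ) • 1)) * P - w‖
        = ‖P * (u - w) * P + (ε : ℂ) • (P * 1 * P) + (P * w * P - w)‖ := by
          congr 1
          simp only [mul_add, add_mul, mul_smul_comm, smul_mul_assoc]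
          abel
      _ ≤ ‖P * (u - w) * P‖ + ‖(ε : ℂ) • (P * 1 * P)‖ + ‖P * w * P - w‖ := norm_add₃_le
      _ ≤ ε + ε * 1 + ε := by
          gcongr
          · exact (norm_conj_le hP _).trans huw
          · rw [norm_smul, Complex.norm_real, Real.norm_of_nonneg hε.le]
            gcongr
            exact (norm_conj_le hP 1).trans ContinuousLinearMap.norm_id_le
      _ = 3 * ε := by ring

variable {S : Set 𝓑(K)} {Φ : 𝓑(K) →ₗ[ℂ] 𝓑(K)}

theorem IsCPOn.sum_vectorFunctional_smulRight_conj (hΦ : IsCPOn S Φ) {t : Finset K}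
    {w d : K → 𝓑(K)} (hdecomp : ∀ x ∈ S, ∑ ξ ∈ t, vectorFunctional ξ (Φ x) • w ξ = Φ x)
    (hd : ∀ ξ ∈ t, 0 ≤ d ξ) (P : 𝓑(K)) :
    IsCPOn S (∑ ξ ∈ t, (vectorFunctional ξ ∘ₗ Φ).smulRight (star P * (w ξ + d ξ) * P)) := by
  refine ((hΦ.add (IsCPOn.sum fun ξ hξ =>
    hΦ.vectorFunctional_smulRight ξ (hd ξ hξ))).conj P).congr fun x hx => ?_
  rw [LinearMap.comp_apply, LinearMap.add_apply, ← hdecomp x hx]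
  simp [LinearMap.mulLeftRight_apply, mul_add, add_mul, Finset.mul_sum, Finset.sum_mul,
    Finset.sum_add_distrib]

theorem IsSelfAdjointApproxUnit.exists_nonneg_add_conj_mem {D : NonUnitalStarSubalgebra ℂ 𝓑(K)}
    {l : Filter 𝓑(K)} [l.NeBot] (hl : IsSelfAdjointApproxUnit D l) {X : Type*} (t : Finset X)
    {w : X → 𝓑(K)} (hw : ∀ x, w x ∈ D.topologicalClosure ∧ IsSelfAdjoint (w x)) {ε : ℝ}
    (hε : 0 < ε) :
    ∃ (P : 𝓑(K)) (d : X → 𝓑(K)), IsSelfAdjoint P ∧ ∀ x ∈ t, 0 ≤ d x ∧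
      P * (w x + d x) * P ∈ D ∧ ‖P * (w x + d x) * P - w x‖ ≤ 3 * ε := by
  have hlim : ∀ᶠ P in l, ∀ x ∈ t, ‖P * w x * P - w x‖ ≤ ε := by
    refine t.eventually_all.2 fun x _ => ?_
    filter_upwards [Metric.tendsto_nhds.1 (hl.topologicalClosure.tendsto _ (hw x).1) ε hε]
      with P hP using (dist_eq_norm _ (w x) ▸ hP).le
  obtain ⟨P, hPD, hP, hPn, hPw⟩ :=
    (hl.mem.and (hl.isSelfAdjoint.and (hl.norm_le_one.and hlim))).exists
  choose! d hd using fun x (hx : x ∈ t) =>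
    _root_.exists_nonneg_add_conj_mem hε (hw x).1 (hw x).2 hPD hPn (hPw x hx)
  exact ⟨P, d, hP, hd⟩

theorem finiteDimensional_range_sum_smulRight {𝕜 V W X : Type*} [Field 𝕜] [AddCommGroup V]
    [Module 𝕜 V] [AddCommGroup W] [Module 𝕜 W] (t : Finset X) (φ : X → Module.Dual 𝕜 V)
    (w : X → W) : FiniteDimensional 𝕜 (LinearMap.range (∑ x ∈ t, (φ x).smulRight (w x))) := by
  have hfin : FiniteDimensional 𝕜 (Submodule.span 𝕜 (w '' t)) :=
    FiniteDimensional.span_of_finite 𝕜 (t.finite_toSet.image w)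
  refine Submodule.finiteDimensional_of_le (S₂ := Submodule.span 𝕜 (w '' t)) ?_
  rintro _ ⟨v, rfl⟩
  rw [LinearMap.sum_apply]
  exact sum_mem fun x hx => Submodule.smul_mem _ _ (Submodule.subset_span ⟨x, hx, rfl⟩)

theorem IsCPOn.exists_finiteRank_norm_sub_le {D : NonUnitalStarSubalgebra ℂ 𝓑(K)}
    {l : Filter 𝓑(K)} [l.NeBot] (hl : IsSelfAdjointApproxUnit D l)
    (hΦ : IsCPOn (D.topologicalClosure : Set 𝓑(K)) Φ)
    (hmem : ∀ x ∈ D.topologicalClosure, Φ x ∈ D.topologicalClosure)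
    (hnorm : ∀ x ∈ D.topologicalClosure, ‖Φ x‖ ≤ ‖x‖)
    (hfd : FiniteDimensional ℂ (Submodule.span ℂ (Φ '' D.topologicalClosure)))
    {δ : ℝ} (hδ : 0 < δ) :
    ∃ Ψ : 𝓑(K) →ₗ[ℂ] 𝓑(K), IsCPOn (D.topologicalClosure : Set 𝓑(K)) Ψ ∧ (∀ x, Ψ x ∈ D) ∧
      FiniteDimensional ℂ (LinearMap.range Ψ) ∧
      ∀ x ∈ D.topologicalClosure, ‖Ψ x - Φ x‖ ≤ δ * ‖x‖ := by
  obtain ⟨t, w, hw, hdecomp⟩ := exists_isSelfAdjoint_sum_vectorFunctional_smul_eq hmem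
    (fun x hx => hΦ.map_star (C := 1) hl.topologicalClosure (by simpa using hnorm) hx) hfd
  set r := ∑ ξ ∈ t, ‖ξ‖ ^ 2
  obtain ⟨ε, hε, hεδ⟩ : ∃ ε > 0, r * (3 * ε) ≤ δ := by
    refine ⟨δ / (3 * (r + 1)), by positivity, ?_⟩
    rw [show r * (3 * (δ / (3 * (r + 1)))) = δ * (r / (r + 1)) by field_simp]
    exact mul_le_of_le_one_right hδ.le (div_le_one_of_le₀ (by linarith) (by positivity))
  obtain ⟨P, d, hP, hd⟩ := hl.exists_nonneg_add_conj_mem t hw hε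
  refine ⟨∑ ξ ∈ t, (vectorFunctional ξ ∘ₗ Φ).smulRight (P * (w ξ + d ξ) * P), ?_, fun x => ?_,
    finiteDimensional_range_sum_smulRight .., fun x hx => ?_⟩
  · simpa only [hP.star_eq] using
      hΦ.sum_vectorFunctional_smulRight_conj hdecomp (fun ξ hξ => (hd ξ hξ).1) P
  · rw [LinearMap.sum_apply]
    exact sum_mem fun ξ hξ => SMulMemClass.smul_mem _ (hd ξ hξ).2.1
  · have happrox := norm_sum_vectorFunctional_smul_sub_le (Φ x) fun ξ hξ => (hd ξ hξ).2.2
    rw [hdecomp x hx] at happrox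
    rw [LinearMap.sum_apply]
    exact happrox.trans (mul_le_mul hεδ (hnorm x hx) (norm_nonneg _) hδ.le)

theorem IsCPOn.exists_finiteRank_approx {D : NonUnitalStarSubalgebra ℂ 𝓑(K)} {l : Filter 𝓑(K)}
    [l.NeBot] (hl : IsSelfAdjointApproxUnit D l)
    (hΦ : IsCPOn (D.topologicalClosure : Set 𝓑(K)) Φ)
    (hmem : ∀ x ∈ D.topologicalClosure, Φ x ∈ D.topologicalClosure)
    (hnorm : ∀ x ∈ D.topologicalClosure, ‖Φ x‖ ≤ ‖x‖)
    (hfd : FiniteDimensional ℂ (Submodule.span ℂ (Φ '' D.topologicalClosure)))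
    {δ : ℝ} (hδ : 0 < δ) :
    ∃ Ψ : 𝓑(K) →ₗ[ℂ] 𝓑(K), IsCPOn (D.topologicalClosure : Set 𝓑(K)) Ψ ∧
      (∀ x ∈ D.topologicalClosure, ‖Ψ x‖ ≤ ‖x‖) ∧ (∀ x, Ψ x ∈ D) ∧
      FiniteDimensional ℂ (LinearMap.range Ψ) ∧
      ∀ x ∈ D.topologicalClosure, ‖Ψ x - Φ x‖ ≤ 2 * δ * ‖x‖ := by
  obtain ⟨Ψ, hΨ, hΨD, hΨfd, happrox⟩ := hΦ.exists_finiteRank_norm_sub_le hl hmem hnorm hfd hδ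
  have hbounds x (hx : x ∈ D.topologicalClosure) :=
    norm_inv_one_add_smul_le hδ (hnorm x hx) (happrox x hx)
  refine ⟨(1 + δ)⁻¹ • Ψ, hΨ.smul (by positivity), fun x hx => (hbounds x hx).1, fun x => ?_,
    Submodule.finiteDimensional_of_le (S₂ := LinearMap.range Ψ) ?_,
    fun x hx => (hbounds x hx).2⟩
  · rw [LinearMap.smul_apply, ← Complex.coe_smul]
    exact SMulMemClass.smul_mem _ (hΨD x)
  · rintro _ ⟨x, rfl⟩
    rw [LinearMap.smul_apply, ← Complex.coe_smul]
    exact Submodule.smul_mem _ _ ⟨x, rfl⟩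

end Perturbation

/-! ### Matrix entries of operators on `ℓ²(X, H)` -/

section Entry

variable {H : Type*} [NormedAddCommGroup H] [InnerProductSpace ℂ H] {X : Type*}

theorem norm_lpEval_le (x : X) : ‖(lpEval x : ℓ²(X, H) →L[ℂ] H)‖ ≤ 1 :=
  LinearMap.mkContinuous_norm_le _ zero_le_one _

theorem lpSingle_apply_self (x : X) (v : H) : (lpSingle x v : ℓ²(X, H)) x = v := by
  simp [lpSingle]

theorem lpSingle_apply_of_ne {x y : X} (h : y ≠ x) (v : H) :
    (lpSingle x v : ℓ²(X, H)) y = 0 := by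
  simp [lpSingle, lp.single_apply, h]

theorem norm_lpSingle_le (x : X) : ‖(lpSingle x : H →L[ℂ] ℓ²(X, H))‖ ≤ 1 :=
  LinearMap.mkContinuous_norm_le _ zero_le_one _

theorem inner_lpSingle_left (x : X) (v : H) (f : ℓ²(X, H)) :
    ⟪lpSingle x v, f⟫_ℂ = ⟪v, f x⟫_ℂ := by
  classical
  exact lp.inner_single_left (𝕜 := ℂ) (G := fun _ : X => H) x v f

theorem hasSum_lpSingle (f : ℓ²(X, H)) : HasSum (fun x => (lpSingle x (f x) : ℓ²(X, H))) f := by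
  classical
  exact lp.hasSum_single (p := 2) (E := fun _ : X => H) (by norm_num) f

/-- The `(x, y)` entry of an operator on `ℓ²(X, H)`, regarded as an `X × X` matrix of operators
on `H`. -/
def opEntry (x y : X) : 𝓑(ℓ²(X, H)) →L[ℂ] 𝓑(H) :=
  (lpEval x).postcomp H ∘L (lpSingle y).precomp ℓ²(X, H)

theorem opEntry_apply_apply (x y : X) (T : 𝓑(ℓ²(X, H))) (v : H) :
    opEntry x y T v = T (lpSingle y v) x := rfl

theorem norm_opEntry_apply_le (x y : X) (T : 𝓑(ℓ²(X, H))) : ‖opEntry x y T‖ ≤ ‖T‖ :=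
  calc ‖lpEval x ∘L T ∘L lpSingle y‖
      ≤ ‖(lpEval x : ℓ²(X, H) →L[ℂ] H)‖ * (‖T‖ * ‖(lpSingle y : H →L[ℂ] ℓ²(X, H))‖) :=
        (ContinuousLinearMap.opNorm_comp_le _ _).trans
          (by gcongr; exact ContinuousLinearMap.opNorm_comp_le _ _)
    _ ≤ 1 * (‖T‖ * 1) := by gcongr <;> [exact norm_lpEval_le x; exact norm_lpSingle_le y]
    _ = ‖T‖ := by ring

theorem inner_opEntry_apply (x y : X) (T : 𝓑(ℓ²(X, H))) (v w : H) :
    ⟪v, opEntry x y T w⟫_ℂ = ⟪lpSingle x v, T (lpSingle y w)⟫_ℂ := by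
  rw [opEntry_apply_apply, inner_lpSingle_left]

theorem sum_inner_sum_sum {K ν σ : Type*} [NormedAddCommGroup K] [InnerProductSpace ℂ K]
    [Fintype ν] [Fintype σ] (N : Matrix ν ν 𝓑(K)) (z : ν → σ → K) :
    ∑ i, ∑ j, ⟪∑ s, z i s, N i j (∑ t, z j t)⟫_ℂ
      = ∑ p : ν × σ, ∑ q : ν × σ, ⟪z p.1 p.2, N p.1 q.1 (z q.1 q.2)⟫_ℂ := by
  simp only [Fintype.sum_prod_type, sum_inner, inner_sum, map_sum]
  exact Finset.sum_congr rfl fun i _ => Finset.sum_comm.trans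
    (Finset.sum_congr rfl fun j _ => Finset.sum_comm) |>.symm

variable [CompleteSpace H] {ν : Type*} [Fintype ν] {M : Matrix ν ν 𝓑(ℓ²(X, H))}

theorem MatPos.opEntry (hM : MatPos M) (x : ν → X) :
    MatPos (of fun i j => opEntry (x i) (x j) (M i j)) := by
  rw [matPos_iff_inner_nonneg] at hM ⊢
  intro v
  simpa only [of_apply, inner_opEntry_apply] using hM fun i => lpSingle (x i) (v i)

theorem matPos_of_forall_opEntry
    (h : ∀ F : Finset X, MatPos (of fun p q : ν × F => _root_.opEntry (p.2 : X) q.2 (M p.1 q.1))) :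
    MatPos M := by
  refine matPos_iff_inner_nonneg.2 fun ξ => ?_
  let truncate (F : Finset X) (i : ν) : ℓ²(X, H) := ∑ x : F, lpSingle (x : X) (ξ i x)
  have truncate_tendsto i : Tendsto (truncate · i) atTop (𝓝 (ξ i)) :=
    (hasSum_lpSingle (ξ i)).congr fun F =>
      (Finset.sum_coe_sort F fun x => lpSingle x (ξ i x)).symm
  have hlim : Tendsto (fun F => ∑ i, ∑ j, ⟪truncate F i, M i j (truncate F j)⟫_ℂ) atTop
      (𝓝 (∑ i, ∑ j, ⟪ξ i, M i j (ξ j)⟫_ℂ)) :=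
    tendsto_finsetSum _ fun i _ => tendsto_finsetSum _ fun j _ =>
      (truncate_tendsto i).inner (((M i j).continuous.tendsto _).comp (truncate_tendsto j))
  refine ge_of_tendsto' hlim fun F => ?_
  rw [sum_inner_sum_sum M fun i (x : F) => lpSingle (x : X) (ξ i x)]
  simpa only [of_apply, inner_opEntry_apply] using
    matPos_iff_inner_nonneg.1 (h F) fun p => ξ p.1 p.2

end Entry

/-! ### The regular covariant representation -/

section RegularRepresentation

variable {H : Type*} [NormedAddCommGroup H] [InnerProductSpace ℂ H] {G : Type*} [Group G]

theorem lam_apply (t s : G) (f : ℓ²(G, H)) : lam t f s = f (t⁻¹ * s) := rfl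

theorem lam_one : lam (1 : G) = (1 : 𝓑(ℓ²(G, H))) := by
  ext f s
  simp [lam_apply]

theorem lam_mul_lam (s t : G) : (lam s * lam t : 𝓑(ℓ²(G, H))) = lam (s * t) := by
  ext f r
  simp [lam_apply, mul_assoc]

theorem norm_lam_le (s : G) : ‖(lam s : 𝓑(ℓ²(G, H)))‖ ≤ 1 :=
  LinearMap.mkContinuous_norm_le _ zero_le_one _

theorem norm_mul_lam_le (x : 𝓑(ℓ²(G, H))) (s : G) : ‖x * lam s‖ ≤ ‖x‖ :=
  (ContinuousLinearMap.opNorm_comp_le x (lam s)).trans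
    (mul_le_of_le_one_right (norm_nonneg x) (norm_lam_le s))

theorem lam_lpSingle (s t : G) (v : H) : lam s (lpSingle t v : ℓ²(G, H)) = lpSingle (s * t) v := by
  ext r
  rw [lam_apply]
  obtain rfl | hr := eq_or_ne r (s * t)
  · rw [lpSingle_apply_self, inv_mul_cancel_left, lpSingle_apply_self]
  · rw [lpSingle_apply_of_ne hr, lpSingle_apply_of_ne (by rwa [Ne, inv_mul_eq_iff_eq_mul])]

theorem opEntry_mul_lam (x : 𝓑(ℓ²(G, H))) (r s t : G) :
    opEntry s t (x * lam r) = opEntry s (r * t) x := by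
  ext v
  simp only [opEntry_apply_apply, mul_apply_eq_comp, lam_lpSingle]

variable [CompleteSpace H]

theorem star_lam (s : G) : star (lam s : 𝓑(ℓ²(G, H))) = lam s⁻¹ := by
  rw [ContinuousLinearMap.star_eq_adjoint, eq_comm, ContinuousLinearMap.eq_adjoint_iff]
  intro f g
  rw [lp.inner_eq_tsum, lp.inner_eq_tsum, ← (Equiv.mulLeft s⁻¹).tsum_eq]
  simp [lam_apply]

variable {A : Type*} [NonUnitalCStarAlgebra A] (ι : A →⋆ₙₐ[ℂ] 𝓑(H)) (α : G → A ≃⋆ₐ[ℂ] A)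

theorem piRep_apply (a : A) (f : ℓ²(G, H)) (s : G) : piRep ι α a f s = ι (α s⁻¹ a) (f s) := rfl

theorem piRep_mul (a b : A) : piRep ι α (a * b) = piRep ι α a * piRep ι α b := by
  ext f s
  simp [piRep_apply]

theorem piRep_star (a : A) : piRep ι α (star a) = star (piRep ι α a) := by
  rw [ContinuousLinearMap.star_eq_adjoint, ContinuousLinearMap.eq_adjoint_iff]
  intro f g
  rw [lp.inner_eq_tsum, lp.inner_eq_tsum]
  refine tsum_congr fun s => ?_
  rw [piRep_apply, piRep_apply, map_star, map_star, ContinuousLinearMap.star_eq_adjoint,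
    ContinuousLinearMap.adjoint_inner_left]

/-- The representation `π` of `A` on `ℓ²(G, H)`, as a star homomorphism. -/
def piHom : A →⋆ₙₐ[ℂ] 𝓑(ℓ²(G, H)) :=
  { piRepLin ι α with
    map_zero' := (piRepLin ι α).map_zero
    map_mul' := piRep_mul ι α
    map_star' := piRep_star ι α }

theorem piHom_apply (a : A) : piHom ι α a = piRep ι α a := rfl

theorem norm_piRep_le (a : A) : ‖piRep ι α a‖ ≤ ‖a‖ :=
  NonUnitalStarAlgHom.norm_apply_le (piHom ι α) a

theorem opEntry_piRep_mul_lam [DecidableEq G] (a : A) (r s t : G) :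
    opEntry s t (piRep ι α a * lam r) = if s = r * t then ι (α s⁻¹ a) else 0 := by
  rw [opEntry_mul_lam]
  ext v
  rw [opEntry_apply_apply, piRep_apply]
  split_ifs with h
  · rw [← h, lpSingle_apply_self]
  · rw [lpSingle_apply_of_ne h, map_zero, _root_.zero_apply]

variable {α} (hα : IsAction α)
include hα

theorem lam_mul_piRep (s : G) (a : A) : lam s * piRep ι α a = piRep ι α (α s a) * lam s := by
  ext f r
  simp [piRep_apply, lam_apply, ← hα.2]

theorem piRep_mul_lam_mul_piRep_mul_lam (a b : A) (s t : G) :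
    piRep ι α a * lam s * (piRep ι α b * lam t) = piRep ι α (a * α s b) * lam (s * t) := by
  rw [mul_assoc, ← mul_assoc (lam s), lam_mul_piRep ι hα, mul_assoc, lam_mul_lam, ← mul_assoc,
    piRep_mul]

theorem star_piRep_mul_lam (a : A) (s : G) :
    star (piRep ι α a * lam s) = piRep ι α (α s⁻¹ (star a)) * lam s⁻¹ := by
  rw [star_mul, star_lam, ← piRep_star, lam_mul_piRep ι hα]

end RegularRepresentation

/-! ### The reduced crossed product -/

section CrossedProduct

variable {H : Type*} [NormedAddCommGroup H] [InnerProductSpace ℂ H] [CompleteSpace H]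
  {G : Type*} [Group G] {A : Type*} [NonUnitalCStarAlgebra A] (ι : A →⋆ₙₐ[ℂ] 𝓑(H))
  {α : G → A ≃⋆ₐ[ℂ] A} (hα : IsAction α)

/-- The algebraic crossed product, spanned by the operators `π(a)λ_t`. Its topological closure has
`CrossedSet ι α` as its underlying set. -/
def algCrossedProduct : NonUnitalStarSubalgebra ℂ 𝓑(ℓ²(G, H)) :=
  { Submodule.span ℂ {x | ∃ (a : A) (t : G), x = piRep ι α a * lam t} with
    mul_mem' := fun {x y} hx hy => by
      have hxy := Submodule.mul_mem_mul hx hy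
      rw [Submodule.span_mul_span] at hxy
      refine Submodule.span_mono ?_ hxy
      rintro _ ⟨_, ⟨a, s, rfl⟩, _, ⟨b, t, rfl⟩, rfl⟩
      exact ⟨a * α s b, s * t, piRep_mul_lam_mul_piRep_mul_lam ι hα a b s t⟩
    star_mem' := fun {x} hx => by
      induction hx using Submodule.span_induction with
      | mem x hx =>
        obtain ⟨a, t, rfl⟩ := hx
        exact Submodule.subset_span ⟨_, _, star_piRep_mul_lam ι hα a t⟩
      | zero => simp
      | add x y _ _ hx hy => exact star_add x y ▸ Submodule.add_mem _ hx hy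
      | smul c x _ hx => exact star_smul c x ▸ Submodule.smul_mem _ _ hx }

theorem mem_algCrossedProduct {x : 𝓑(ℓ²(G, H))} :
    x ∈ algCrossedProduct ι hα ↔
      x ∈ Submodule.span ℂ {x | ∃ (a : A) (t : G), x = piRep ι α a * lam t} := Iff.rfl

theorem mem_topologicalClosure_algCrossedProduct {x : 𝓑(ℓ²(G, H))} :
    x ∈ (algCrossedProduct ι hα).topologicalClosure ↔ x ∈ CrossedSet ι α := Iff.rfl

theorem piRep_mul_lam_mem_algCrossedProduct (a : A) (t : G) :
    piRep ι α a * lam t ∈ algCrossedProduct ι hα :=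
  Submodule.subset_span ⟨a, t, rfl⟩

theorem piRep_mem_algCrossedProduct (a : A) : piRep ι α a ∈ algCrossedProduct ι hα := by
  simpa only [lam_one, mul_one] using piRep_mul_lam_mem_algCrossedProduct ι hα a 1

end CrossedProduct

section ApproximateUnit

theorem tendsto_mul_mul_of_norm_le_one {R β : Type*} [NonUnitalSeminormedRing R] {l : Filter β}
    {e f : β → R} {a : R} (he : ∀ᶠ i in l, ‖e i‖ ≤ 1) (hea : Tendsto (fun i => e i * a) l (𝓝 a))
    (haf : Tendsto (fun i => a * f i) l (𝓝 a)) : Tendsto (fun i => e i * a * f i) l (𝓝 a) := by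
  rw [tendsto_iff_norm_sub_tendsto_zero] at hea haf ⊢
  refine squeeze_zero' (.of_forall fun _ => norm_nonneg _) ?_ (by simpa using haf.add hea)
  filter_upwards [he] with i hi
  calc ‖e i * a * f i - a‖ = ‖e i * (a * f i - a) + (e i * a - a)‖ := by
        rw [mul_sub, mul_assoc, sub_add_sub_cancel]
    _ ≤ ‖e i‖ * ‖a * f i - a‖ + ‖e i * a - a‖ := norm_add_le_of_le (norm_mul_le _ _) le_rfl
    _ ≤ ‖a * f i - a‖ + ‖e i * a - a‖ := by grw [hi, one_mul]

variable {H : Type*} [NormedAddCommGroup H] [InnerProductSpace ℂ H] [CompleteSpace H]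
  {G : Type*} [Group G] {A : Type*} [NonUnitalCStarAlgebra A] (ι : A →⋆ₙₐ[ℂ] 𝓑(H))
  {α : G → A ≃⋆ₐ[ℂ] A} (hα : IsAction α)

theorem continuous_piRep (α : G → A ≃⋆ₐ[ℂ] A) : Continuous (piRep ι α) :=
  AddMonoidHomClass.continuous_of_bound (piRepLin ι α) 1 fun a =>
    (norm_piRep_le ι α a).trans_eq (one_mul _).symm

theorem tendsto_piRep_mul {l : Filter A} (hl : ∀ a : A, Tendsto (fun e => e * a) l (𝓝 a))
    {x : 𝓑(ℓ²(G, H))} (hx : x ∈ algCrossedProduct ι hα) :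
    Tendsto (fun e => piRep ι α e * x) l (𝓝 x) := by
  rw [mem_algCrossedProduct] at hx
  induction hx using Submodule.span_induction with
  | mem x hx =>
    obtain ⟨a, t, rfl⟩ := hx
    simp only [← mul_assoc, ← piRep_mul]
    exact (((continuous_piRep ι α).tendsto a).comp (hl a)).mul_const _
  | zero => simpa only [mul_zero] using tendsto_const_nhds
  | add x y _ _ hx hy => simpa only [mul_add] using hx.add hy
  | smul c x _ hx => simpa only [mul_smul_comm] using hx.const_smul c

theorem isSelfAdjointApproxUnit_map_piRep {l : Filter A} (hsa : ∀ᶠ e in l, IsSelfAdjoint e)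
    (hnorm : ∀ᶠ e in l, ‖e‖ ≤ 1) (hl : ∀ a : A, Tendsto (fun e => e * a) l (𝓝 a)) :
    IsSelfAdjointApproxUnit (algCrossedProduct ι hα) (l.map (piRep ι α)) where
  mem := eventually_map.2 (.of_forall fun e => piRep_mem_algCrossedProduct ι hα e)
  isSelfAdjoint := hsa.mono fun e he => he.map (piHom ι α)
  norm_le_one := hnorm.mono fun e he => (norm_piRep_le ι α e).trans he
  tendsto x hx := by
    have hright : Tendsto (fun e => x * piRep ι α e) l (𝓝 x) := by
      have := (tendsto_piRep_mul ι hα hl (star_mem hx)).star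
      rw [star_star] at this
      refine this.congr' (hsa.mono fun e he => ?_)
      rw [star_mul, star_star, ← piRep_star, he.star_eq]
    exact tendsto_mul_mul_of_norm_le_one
      (hnorm.mono fun e he => (norm_piRep_le ι α e).trans he) (tendsto_piRep_mul ι hα hl hx) hright

theorem exists_isSelfAdjointApproxUnit_map_piRep :
    ∃ l : Filter A, l.NeBot ∧ (∀ᶠ e in l, ‖e‖ ≤ 1) ∧
      IsSelfAdjointApproxUnit (algCrossedProduct ι hα) (l.map (piRep ι α)) := by
  let := CStarAlgebra.spectralOrder A
  have := CStarAlgebra.spectralOrderedRing A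
  have hl := CStarAlgebra.increasingApproximateUnit A
  exact ⟨CStarAlgebra.approximateUnit A, inferInstance, hl.eventually_norm,
    isSelfAdjointApproxUnit_map_piRep ι hα hl.eventually_star_eq hl.eventually_norm
      hl.tendsto_mul_right⟩

end ApproximateUnit

/-! ### Fourier coefficients -/

section Fourier

variable {H : Type*} [NormedAddCommGroup H] [InnerProductSpace ℂ H] [CompleteSpace H]
  {G : Type*} [Group G] {A : Type*} [NonUnitalCStarAlgebra A] {ι : A →⋆ₙₐ[ℂ] 𝓑(H)}
  {α : G → A ≃⋆ₐ[ℂ] A}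

theorem mul_lam_mem_crossedSet {x : 𝓑(ℓ²(G, H))} (hx : x ∈ CrossedSet ι α) (s : G) :
    x * lam s ∈ CrossedSet ι α := by
  refine map_mem_closure (f := (· * lam s)) (by fun_prop) hx fun y hy => ?_
  refine (Submodule.span_le (p := (Submodule.span ℂ _).comap (LinearMap.mulRight ℂ (lam s)))).2
    ?_ hy
  rintro _ ⟨a, t, rfl⟩
  exact Submodule.subset_span ⟨a, t * s, by rw [LinearMap.mulRight_apply, mul_assoc, lam_mul_lam]⟩

theorem piRep_mul_lam_mem_crossedSet (a : A) (s : G) : piRep ι α a * lam s ∈ CrossedSet ι α :=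
  subset_closure (Submodule.subset_span ⟨a, s, rfl⟩)

variable {E : 𝓑(ℓ²(G, H)) →ₗ[ℂ] A}

theorem IsCondExp.map_apply_eq_opEntry (hE : IsCondExp ι α E) {x : 𝓑(ℓ²(G, H))}
    (hx : x ∈ CrossedSet ι α) : ι (E x) = opEntry 1 1 x := hE x hx

variable (hι : Function.Injective ι)
include hι

theorem opEntry_one_one_mem_range (hα : IsAction α) {x : 𝓑(ℓ²(G, H))}
    (hx : x ∈ CrossedSet ι α) : opEntry 1 1 x ∈ (iotaLin ι).range := by
  classical
  have hclosed : IsClosed ((iotaLin ι).range : Set 𝓑(H)) :=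
    (NonUnitalStarAlgHom.isometry ι hι).isClosedEmbedding.isClosed_range
  refine hclosed.closure_subset (map_mem_closure (opEntry 1 1).continuous hx fun y hy => ?_)
  refine (Submodule.span_le (p := (iotaLin ι).range.comap (opEntry 1 1).toLinearMap)).2 ?_ hy
  rintro _ ⟨a, t, rfl⟩
  refine ⟨if 1 = t then a else 0, ?_⟩
  rw [ContinuousLinearMap.coe_coe, opEntry_piRep_mul_lam, mul_one, inv_one, hα.1,
    apply_ite (iotaLin ι), map_zero]
  rfl

theorem exists_isCondExp (hα : IsAction α) :
    ∃ E : 𝓑(ℓ²(G, H)) →ₗ[ℂ] A, IsCondExp ι α E := by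
  obtain ⟨g, hg⟩ := (iotaLin ι).exists_leftInverse_of_injective (LinearMap.ker_eq_bot.2 hι)
  refine ⟨g ∘ₗ (opEntry 1 1).toLinearMap, fun x hx => ?_⟩
  obtain ⟨a, ha⟩ := opEntry_one_one_mem_range hι hα hx
  have hga : g (opEntry 1 1 x) = a := by rw [← ha]; exact LinearMap.congr_fun hg a
  exact (congrArg ι hga).trans ha

namespace IsCondExp

variable (hE : IsCondExp ι α E) {x : 𝓑(ℓ²(G, H))}
include hE

theorem norm_apply_le (hx : x ∈ CrossedSet ι α) : ‖E x‖ ≤ ‖x‖ := by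
  rw [← NonUnitalStarAlgHom.norm_map ι hι, hE.map_apply_eq_opEntry hx]
  exact norm_opEntry_apply_le 1 1 x

theorem continuousOn : ContinuousOn E (CrossedSet ι α) := by
  rw [(NonUnitalStarAlgHom.isometry ι hι).isEmbedding.isInducing.continuousOn_iff]
  exact (opEntry 1 1).continuous.continuousOn.congr fun x hx => hE.map_apply_eq_opEntry hx

variable (hα : IsAction α)
include hα

theorem apply_piRep_mul_lam [DecidableEq G] (a : A) (t : G) :
    E (piRep ι α a * lam t) = if t = 1 then a else 0 := by
  refine hι ((hE.map_apply_eq_opEntry (piRep_mul_lam_mem_crossedSet a t)).trans ?_)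
  rw [opEntry_piRep_mul_lam, mul_one, inv_one, hα.1, apply_ite ι, map_zero]
  simp only [eq_comm]

theorem map_action_apply_eq_opEntry (hx : x ∈ CrossedSet ι α) (r : G) :
    ι (α r⁻¹ (E x)) = opEntry r r x := by
  classical
  have hgen : Set.EqOn (iotaLin ι ∘ₗ autLin (α r⁻¹) ∘ₗ E) (opEntry r r).toLinearMap
      {x | ∃ (a : A) (t : G), x = piRep ι α a * lam t} := by
    rintro _ ⟨a, t, rfl⟩
    have : ι (α r⁻¹ (if t = 1 then a else 0)) = if r = t * r then ι (α r⁻¹ a) else 0 := by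
      simp only [right_eq_mul, apply_ite ι, apply_ite (α r⁻¹), map_zero]
    simpa only [LinearMap.comp_apply, hE.apply_piRep_mul_lam hι hα, ContinuousLinearMap.coe_coe,
      opEntry_piRep_mul_lam] using! this
  have hcont : ContinuousOn (fun x => ι (α r⁻¹ (E x))) (CrossedSet ι α) :=
    ((NonUnitalStarAlgHom.isometry ι hι).continuous.comp
      (StarAlgEquiv.isometry (α r⁻¹)).continuous).comp_continuousOn (hE.continuousOn hι)
  exact Set.EqOn.of_subset_closure (LinearMap.eqOn_span' hgen) hcont
    (opEntry r r).continuous.continuousOn subset_closure subset_rfl hx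

end IsCondExp

end Fourier

section FourierTerm

variable {H : Type*} [NormedAddCommGroup H] [InnerProductSpace ℂ H] [CompleteSpace H]
  {G : Type*} [Group G] {A : Type*} [NonUnitalCStarAlgebra A] (ι : A →⋆ₙₐ[ℂ] 𝓑(H))
  (α : G → A ≃⋆ₐ[ℂ] A) (E : 𝓑(ℓ²(G, H)) →ₗ[ℂ] A)

/-- The term `π(E(xλ_s*))λ_s` of the formal Fourier series of `x`, where `E` is the conditional
expectation. -/
def fourierTerm (s : G) : 𝓑(ℓ²(G, H)) →ₗ[ℂ] 𝓑(ℓ²(G, H)) :=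
  LinearMap.mulRight ℂ (lam s) ∘ₗ piRepLin ι α ∘ₗ E ∘ₗ LinearMap.mulRight ℂ (lam s⁻¹)

theorem fourierTerm_apply (s : G) (x : 𝓑(ℓ²(G, H))) :
    fourierTerm ι α E s x = piRep ι α (E (x * lam s⁻¹)) * lam s := rfl

theorem fourierTerm_eq_zero {s : G} {x : 𝓑(ℓ²(G, H))} (hx : E (x * lam s⁻¹) = 0) :
    fourierTerm ι α E s x = 0 := by
  rw [fourierTerm_apply, hx, ← piHom_apply, map_zero, zero_mul]

theorem fourierTerm_mem_crossedSet (s : G) (x : 𝓑(ℓ²(G, H))) :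
    fourierTerm ι α E s x ∈ CrossedSet ι α :=
  piRep_mul_lam_mem_crossedSet _ s

variable {ι α E} (hι : Function.Injective ι) (hα : IsAction α) (hE : IsCondExp ι α E)
include hι hE

theorem norm_fourierTerm_le (s : G) {x : 𝓑(ℓ²(G, H))} (hx : x ∈ CrossedSet ι α) :
    ‖fourierTerm ι α E s x‖ ≤ ‖x‖ := by
  rw [fourierTerm_apply]
  calc ‖piRep ι α (E (x * lam s⁻¹)) * lam s‖ ≤ ‖piRep ι α (E (x * lam s⁻¹))‖ := norm_mul_lam_le _ s
    _ ≤ ‖E (x * lam s⁻¹)‖ := norm_piRep_le ι α _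
    _ ≤ ‖x * lam s⁻¹‖ := hE.norm_apply_le hι (mul_lam_mem_crossedSet hx _)
    _ ≤ ‖x‖ := norm_mul_lam_le x _

include hα

theorem fourierTerm_piRep_mul_lam [DecidableEq G] (a : A) (r s : G) :
    fourierTerm ι α E s (piRep ι α a * lam r) = if s = r then piRep ι α a * lam r else 0 := by
  rw [fourierTerm_apply, mul_assoc, lam_mul_lam, hE.apply_piRep_mul_lam hι hα]
  obtain rfl | hsr := eq_or_ne s r
  · rw [if_pos (mul_inv_cancel s), if_pos rfl]
  · rw [if_neg (mul_inv_eq_one.not.2 hsr.symm), if_neg hsr, ← piHom_apply, map_zero, zero_mul]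

theorem fourierTerm_apply_apply (s : G) {x : 𝓑(ℓ²(G, H))} (hx : x ∈ CrossedSet ι α)
    (f : ℓ²(G, H)) (u : G) :
    fourierTerm ι α E s x f u = opEntry u (s⁻¹ * u) x (f (s⁻¹ * u)) := by
  rw [fourierTerm_apply, mul_apply_eq_comp, piRep_apply, lam_apply,
    hE.map_action_apply_eq_opEntry hι hα (mul_lam_mem_crossedSet hx _), opEntry_mul_lam]

theorem opEntry_fourierTerm [DecidableEq G] (s p q : G) {x : 𝓑(ℓ²(G, H))}
    (hx : x ∈ CrossedSet ι α) :
    opEntry p q (fourierTerm ι α E s x) = if s = p * q⁻¹ then opEntry p q x else 0 := by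
  ext v
  rw [opEntry_apply_apply, fourierTerm_apply_apply hι hα hE s hx]
  split_ifs with hs
  · rw [hs, _root_.mul_inv_rev, inv_inv, inv_mul_cancel_right, lpSingle_apply_self]
  · rw [lpSingle_apply_of_ne fun h => hs (by rw [← h]; group), map_zero, _root_.zero_apply]

theorem hasSum_inner_fourierTerm (g h : G) {x : 𝓑(ℓ²(G, H))} (hx : x ∈ CrossedSet ι α)
    (ξ η : ℓ²(G, H)) :
    HasSum (fun v => ⟪ξ (g * v), opEntry (g * v) (h * v) x (η (h * v))⟫_ℂ)
      ⟪ξ, fourierTerm ι α E (g * h⁻¹) x η⟫_ℂ := by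
  refine ((Equiv.mulLeft g).hasSum_iff.2
    (lp.hasSum_inner ξ (fourierTerm ι α E (g * h⁻¹) x η))).congr_fun fun v => ?_
  rw [Function.comp_apply, Equiv.coe_mulLeft, fourierTerm_apply_apply hι hα hE _ hx]
  simp only [_root_.mul_inv_rev, inv_inv, mul_assoc, inv_mul_cancel_left]

theorem MatPos.fourierTerm {ν : Type*} [Fintype ν] {M : Matrix ν ν 𝓑(ℓ²(G, H))}
    (hM : MatPos M) (hMmem : ∀ i j, M i j ∈ CrossedSet ι α) (g : ν → G) :
    MatPos (of fun p q => _root_.fourierTerm ι α E (g p * (g q)⁻¹) (M p q)) := by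
  rw [matPos_iff_inner_nonneg]
  intro ξ
  refine (hasSum_sum fun p _ => hasSum_sum fun q _ =>
    hasSum_inner_fourierTerm hι hα hE (g p) (g q) (hMmem p q) (ξ p) (ξ q)).nonneg fun v => ?_
  exact matPos_iff_inner_nonneg.1 (hM.opEntry fun p => g p * v) fun p => ξ p (g p * v)

end FourierTerm

/-! ### From maps on the crossed product to Herz-Schur multipliers -/

section FourierCompression

variable {H : Type*} [NormedAddCommGroup H] [InnerProductSpace ℂ H] [CompleteSpace H]
  {G : Type*} [Group G] {A : Type*} [NonUnitalCStarAlgebra A] (ι : A →⋆ₙₐ[ℂ] 𝓑(H))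
  (α : G → A ≃⋆ₐ[ℂ] A) (E : 𝓑(ℓ²(G, H)) →ₗ[ℂ] A) (Φ : 𝓑(ℓ²(G, H)) →ₗ[ℂ] 𝓑(ℓ²(G, H)))
  (T : Finset G)

/-- The part of `Φ` which preserves the Fourier degrees in `T`. If `T` contains the Fourier
supports of all values of `Φ`, then this is the map `S_F` for the multiplier `F = h_Φ`. -/
def fourierCompression : 𝓑(ℓ²(G, H)) →ₗ[ℂ] 𝓑(ℓ²(G, H)) :=
  ∑ s ∈ T, fourierTerm ι α E s ∘ₗ Φ ∘ₗ fourierTerm ι α E s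

theorem fourierCompression_apply (x : 𝓑(ℓ²(G, H))) :
    fourierCompression ι α E Φ T x =
      ∑ s ∈ T, fourierTerm ι α E s (Φ (fourierTerm ι α E s x)) := by
  simp only [fourierCompression, LinearMap.sum_apply, LinearMap.comp_apply]

theorem hMap_apply (s : G) (a : A) :
    hMap ι α E Φ s a = E (Φ (piRep ι α a * lam s) * lam s⁻¹) := by
  rw [← star_lam]
  rfl

theorem fourierCompression_mem_crossedSet (hα : IsAction α) (x : 𝓑(ℓ²(G, H))) :
    fourierCompression ι α E Φ T x ∈ CrossedSet ι α := by
  rw [fourierCompression_apply, ← mem_topologicalClosure_algCrossedProduct ι hα]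
  exact sum_mem fun s _ => fourierTerm_mem_crossedSet ι α E s _

variable {ι α E Φ T} (hι : Function.Injective ι) (hα : IsAction α) (hE : IsCondExp ι α E)
  (hΦmem : ∀ x ∈ CrossedSet ι α, Φ x ∈ CrossedSet ι α)
  (hΦnorm : ∀ x ∈ CrossedSet ι α, ‖Φ x‖ ≤ ‖x‖)
  (hΦ : IsCPOn (CrossedSet ι α) Φ)
  (hT : ∀ s ∉ T, ∀ x ∈ CrossedSet ι α, E (Φ x * lam s⁻¹) = 0)

include hι hE hΦmem hΦnorm in
theorem norm_fourierCompression_le {x : 𝓑(ℓ²(G, H))} (hx : x ∈ CrossedSet ι α) :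
    ‖fourierCompression ι α E Φ T x‖ ≤ T.card * ‖x‖ := by
  rw [fourierCompression_apply, ← nsmul_eq_mul]
  calc ‖∑ s ∈ T, fourierTerm ι α E s (Φ (fourierTerm ι α E s x))‖ ≤ ∑ _s ∈ T, ‖x‖ := by
        refine norm_sum_le_of_le _ fun s _ => ?_
        have hs := fourierTerm_mem_crossedSet ι α E s x
        exact (norm_fourierTerm_le hι hE s (hΦmem _ hs)).trans
          ((hΦnorm _ hs).trans (norm_fourierTerm_le hι hE s hx))
    _ = T.card • ‖x‖ := Finset.sum_const _

include hι hα hE hT in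
theorem hsGenProp_fourierCompression :
    HSGenProp ι α (hMap ι α E Φ) (fourierCompression ι α E Φ T) := by
  classical
  intro a s
  rw [fourierCompression_apply, Finset.sum_eq_single s]
  · rw [fourierTerm_piRep_mul_lam hι hα hE, if_pos rfl, fourierTerm_apply, hMap_apply]
  · intro t _ hts
    rw [fourierTerm_piRep_mul_lam hι hα hE, if_neg hts, map_zero, map_zero]
  · intro hs
    rw [fourierTerm_piRep_mul_lam hι hα hE, if_pos rfl,
      fourierTerm_eq_zero ι α E (hT s hs _ (piRep_mul_lam_mem_crossedSet a s))]

include hι hα hE hΦmem hT in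
theorem opEntry_fourierCompression (x : 𝓑(ℓ²(G, H))) (p q : G) :
    opEntry p q (fourierCompression ι α E Φ T x) =
      opEntry p q (Φ (fourierTerm ι α E (p * q⁻¹) x)) := by
  classical
  have hmem s : Φ (fourierTerm ι α E s x) ∈ CrossedSet ι α :=
    hΦmem _ (fourierTerm_mem_crossedSet ι α E s x)
  simp only [fourierCompression_apply, map_sum, opEntry_fourierTerm hι hα hE _ _ _ (hmem _)]
  rw [Finset.sum_ite_eq']
  split_ifs with hpq
  · rfl
  · have hentry := opEntry_fourierTerm hι hα hE (p * q⁻¹) p q (hmem (p * q⁻¹))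
    rwa [if_pos rfl, fourierTerm_eq_zero ι α E
      (hT _ hpq _ (fourierTerm_mem_crossedSet ι α E _ x)), map_zero] at hentry

include hι hα hE hΦmem hΦ hT in
theorem isCPOn_fourierCompression : IsCPOn (CrossedSet ι α) (fourierCompression ι α E Φ T) := by
  intro n M hMmem hM
  refine matPos_of_forall_opEntry fun F => ?_
  have hterm := (hM.submatrix (Prod.fst : Fin n × F → Fin n)).fourierTerm hι hα hE
    (fun p q => hMmem p.1 q.1) fun p => (p.2 : G)
  have hmap := hΦ.matPos_map (fun p q => fourierTerm_mem_crossedSet ι α E _ _) hterm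
  simpa only [map_apply, of_apply, submatrix_apply,
    opEntry_fourierCompression hι hα hE hΦmem hT] using! hmap.opEntry fun p => (p.2 : G)

include hι hα hE hΦmem hΦnorm hΦ hT in
theorem isHerzSchurMultiplierCP_hMap : IsHerzSchurMultiplierCP ι α (hMap ι α E Φ) := by
  obtain ⟨l, hlbot, -, hl⟩ := exists_isSelfAdjointApproxUnit_map_piRep ι hα
  have hcp := isCPOn_fourierCompression hι hα hE hΦmem hΦ hT
  refine ⟨fourierCompression ι α E Φ T, hsGenProp_fourierCompression hι hα hE hT,
    ⟨fun x _ => fourierCompression_mem_crossedSet ι α E Φ T hα x, hcp⟩, T.card, T.card.cast_nonneg,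
    fun n M hM => ?_⟩
  exact IsCPOn.norm_matOp_map_le_of_norm_le (B := (algCrossedProduct ι hα).topologicalClosure) hcp
    hl.topologicalClosure T.card.cast_nonneg
    (fun x hx => norm_fourierCompression_le hι hE hΦmem hΦnorm hx) hM

include hι hα hE hΦmem hΦnorm hΦ in
theorem cbBound_hMap_one : CBBound (fun a => ι a) (fun a => ι a) (hMap ι α E Φ 1) 1 := by
  obtain ⟨l, hlbot, -, hl⟩ := exists_isSelfAdjointApproxUnit_map_piRep ι hα
  intro n M
  have hmem a : piRep ι α a ∈ CrossedSet ι α := subset_closure (piRep_mem_algCrossedProduct ι hα a)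
  have hcp : IsCPOn (CrossedSet ι α) ((opEntry 1 1).toLinearMap ∘ₗ Φ) := fun n M hMmem hM =>
    (hΦ n M hMmem hM).opEntry fun _ => 1
  have hentry : (M.map fun a => ι (hMap ι α E Φ 1 a)) =
      (M.map (piHom ι α)).map ((opEntry 1 1).toLinearMap ∘ₗ Φ) := by
    ext i j : 1
    simp only [map_apply, hMap_apply, inv_one, lam_one, mul_one]
    rw [hE.map_apply_eq_opEntry (hΦmem _ (hmem _))]
    rfl
  calc ‖matOp (M.map fun a => ι (hMap ι α E Φ 1 a))‖ ≤ 1 * ‖matOp (M.map (piHom ι α))‖ := by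
        rw [hentry]
        refine IsCPOn.norm_matOp_map_le_of_norm_le
          (B := (algCrossedProduct ι hα).topologicalClosure) hcp hl.topologicalClosure zero_le_one
          (fun x hx => ?_) fun i j => hmem (M i j)
        rw [one_mul]
        exact (norm_opEntry_apply_le 1 1 _).trans (hΦnorm x hx)
    _ ≤ 1 * ‖matOp (M.map ι)‖ := by
        gcongr
        exact norm_matOp_map_le_of_injective hι (piHom ι α) M

include hι hα hE hΦmem in
theorem norm_hMap_sub_le (s : G) (a : A) :
    ‖hMap ι α E Φ s a - a‖ ≤ ‖Φ (piRep ι α a * lam s) - piRep ι α a * lam s‖ := by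
  classical
  have hx := piRep_mul_lam_mem_crossedSet (ι := ι) (α := α) a s
  have hsub : hMap ι α E Φ s a - a =
      E ((Φ (piRep ι α a * lam s) - piRep ι α a * lam s) * lam s⁻¹) := by
    rw [sub_mul, map_sub, mul_assoc (piRep ι α a), lam_mul_lam, hE.apply_piRep_mul_lam hι hα,
      mul_inv_cancel, if_pos rfl, hMap_apply]
  rw [hsub]
  refine (hE.norm_apply_le hι (mul_lam_mem_crossedSet ?_ _)).trans (norm_mul_lam_le _ _)
  rw [← mem_topologicalClosure_algCrossedProduct ι hα] at hx ⊢
  exact sub_mem (hΦmem _ hx) hx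

theorem finiteDimensional_range_hMap [FiniteDimensional ℂ (LinearMap.range Φ)] (s : G) :
    FiniteDimensional ℂ (LinearMap.range (hMap ι α E Φ s)) := by
  have hle : LinearMap.range (hMap ι α E Φ s) ≤
      (LinearMap.range Φ).map (E ∘ₗ LinearMap.mulRight ℂ (lam s⁻¹)) := by
    rintro _ ⟨a, rfl⟩
    exact ⟨_, ⟨_, rfl⟩, (hMap_apply ι α E Φ s a).symm⟩
  exact Submodule.finiteDimensional_of_le hle

include hι hα hE in
theorem exists_finset_forall_notMem_condExp_eq_zero {x : 𝓑(ℓ²(G, H))}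
    (hx : x ∈ algCrossedProduct ι hα) :
    ∃ T : Finset G, ∀ s ∉ T, E (x * lam s⁻¹) = 0 := by
  classical
  rw [mem_algCrossedProduct] at hx
  induction hx using Submodule.span_induction with
  | mem x hx =>
    obtain ⟨a, t, rfl⟩ := hx
    refine ⟨{t}, fun s hs => ?_⟩
    rw [mul_assoc, lam_mul_lam, hE.apply_piRep_mul_lam hι hα, if_neg]
    exact fun h => hs (Finset.mem_singleton.2 (mul_inv_eq_one.1 h).symm)
  | zero => exact ⟨∅, fun s _ => by rw [zero_mul, map_zero]⟩
  | add x y _ _ hx hy =>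
    obtain ⟨T, hT⟩ := hx
    obtain ⟨U, hU⟩ := hy
    refine ⟨T ∪ U, fun s hs => ?_⟩
    rw [Finset.notMem_union] at hs
    rw [add_mul, map_add, hT s hs.1, hU s hs.2, add_zero]
  | smul c x _ hx =>
    obtain ⟨T, hT⟩ := hx
    exact ⟨T, fun s hs => by rw [smul_mul_assoc, map_smul, hT s hs, smul_zero]⟩

include hι hE in
theorem exists_finset_forall_map_condExp_eq_zero [FiniteDimensional ℂ (LinearMap.range Φ)]
    (hD : ∀ x, Φ x ∈ algCrossedProduct ι hα) :
    ∃ T : Finset G, ∀ s ∉ T, ∀ x, E (Φ x * lam s⁻¹) = 0 := by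
  classical
  let b := Module.finBasis ℂ (LinearMap.range Φ)
  have hb i : (b i : 𝓑(ℓ²(G, H))) ∈ algCrossedProduct ι hα := by
    obtain ⟨x, hx⟩ := (b i).2
    exact hx ▸ hD x
  choose T hT using fun i => exists_finset_forall_notMem_condExp_eq_zero hι hα hE (hb i)
  refine ⟨Finset.univ.biUnion T, fun s hs x => ?_⟩
  have hzero : (E ∘ₗ LinearMap.mulRight ℂ (lam s⁻¹)) ∘ₗ (LinearMap.range Φ).subtype = 0 :=
    b.ext fun i => hT i s fun h => hs (Finset.mem_biUnion.2 ⟨i, Finset.mem_univ i, h⟩)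
  exact LinearMap.congr_fun hzero ⟨Φ x, x, rfl⟩

end FourierCompression

section CrossedToDyn

variable {H : Type*} [NormedAddCommGroup H] [InnerProductSpace ℂ H] [CompleteSpace H]
  {G : Type*} [Group G] {A : Type*} [NonUnitalCStarAlgebra A] {ι : A →⋆ₙₐ[ℂ] 𝓑(H)}
  {α : G → A ≃⋆ₐ[ℂ] A} (hι : Function.Injective ι) (hα : IsAction α)
include hι hα

theorem CPOnCrossed.exists_isHerzSchurMultiplierCP_approx
    {Φ : 𝓑(ℓ²(G, H)) →ₗ[ℂ] 𝓑(ℓ²(G, H))} (hΦ : CPOnCrossed ι α Φ)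
    (hnorm : ∀ x ∈ CrossedSet ι α, ‖Φ x‖ ≤ ‖x‖)
    (hfd : FiniteDimensional ℂ (Submodule.span ℂ (Φ '' CrossedSet ι α))) {δ : ℝ} (hδ : 0 < δ) :
    ∃ F : G → A →ₗ[ℂ] A, IsHerzSchurMultiplierCP ι α F ∧ (Function.support F).Finite ∧
      CBBound (fun a => ι a) (fun a => ι a) (F 1) 1 ∧
      (∀ s, FiniteDimensional ℂ (LinearMap.range (F s))) ∧
      ∀ s a, ‖F s a - a‖ ≤ 2 * δ * ‖piRep ι α a * lam s‖ +
        ‖Φ (piRep ι α a * lam s) - piRep ι α a * lam s‖ := by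
  obtain ⟨l, hlbot, -, hl⟩ := exists_isSelfAdjointApproxUnit_map_piRep ι hα
  obtain ⟨E, hE⟩ := exists_isCondExp hι hα
  obtain ⟨Ψ, hΨ, hΨnorm, hΨD, hΨfd, hΨΦ⟩ :=
    IsCPOn.exists_finiteRank_approx hl hΦ.2 hΦ.1 hnorm hfd hδ
  have hΨmem x (_ : x ∈ CrossedSet ι α) : Ψ x ∈ CrossedSet ι α := subset_closure (hΨD x)
  obtain ⟨T, hT⟩ := exists_finset_forall_map_condExp_eq_zero hι hα hE hΨD
  refine ⟨hMap ι α E Ψ, isHerzSchurMultiplierCP_hMap hι hα hE hΨmem hΨnorm hΨ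
    fun s hs x _ => hT s hs x, ?_, cbBound_hMap_one hι hα hE hΨmem hΨnorm hΨ,
    finiteDimensional_range_hMap, fun s a => ?_⟩
  · refine T.finite_toSet.subset fun s hs => by_contra fun hsT => hs (LinearMap.ext fun a => ?_)
    rw [hMap_apply, hT s hsT, LinearMap.zero_apply]
  · refine (norm_hMap_sub_le hι hα hE hΨmem s a).trans ?_
    rw [← sub_add_sub_cancel _ (Φ (piRep ι α a * lam s))]
    exact norm_add_le_of_le (hΨΦ _ (piRep_mul_lam_mem_crossedSet a s)) le_rfl

theorem CrossedNuclear.dynNuclear (h : CrossedNuclear ι α) : DynNuclear ι α := by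
  obtain ⟨I, hI, hS, Φ, hcp, hnorm, hfd, hlim⟩ := h
  choose F hHS hsupp hcb hFfd hF using fun p : I × ℕ =>
    (hcp p.1).exists_isHerzSchurMultiplierCP_approx hι hα (hnorm p.1) (hfd p.1)
      (δ := 1 / ((p.2 : ℝ) + 1)) Nat.one_div_pos_of_nat
  refine ⟨I × ℕ, inferInstance, inferInstance, F, hHS, hsupp, hcb, hFfd, fun s a => ?_⟩
  have hδ : Tendsto (fun p : I × ℕ => 1 / ((p.2 : ℝ) + 1)) (atTop ×ˢ atTop) (𝓝 0) :=
    tendsto_one_div_add_atTop_nhds_zero_nat.comp tendsto_snd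
  have hΦ := (hlim _ (piRep_mul_lam_mem_crossedSet a s)).comp
    (tendsto_fst (f := (atTop : Filter I)) (g := (atTop : Filter ℕ)))
  refine squeeze_zero (fun p => norm_nonneg _) (hF · s a) ?_
  rw [← prod_atTop_atTop_eq]
  simpa using ((hδ.const_mul 2).mul_const ‖piRep ι α a * lam s‖).add hΦ

end CrossedToDyn

/-! ### From Herz-Schur multipliers to maps on the crossed product -/

section Density

variable {𝕜 V : Type*} [NontriviallyNormedField 𝕜] [NormedAddCommGroup V] [NormedSpace 𝕜 V]
  {s : Set V}

theorem lipschitzOnWith_one_closure_span {Φ : V →ₗ[𝕜] V}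
    (hΦ : ∀ x ∈ closure (Submodule.span 𝕜 s : Set V), ‖Φ x‖ ≤ ‖x‖) :
    LipschitzOnWith 1 Φ (closure (Submodule.span 𝕜 s)) := by
  refine LipschitzOnWith.mk_one fun x hx y hy => ?_
  rw [dist_eq_norm, dist_eq_norm, ← map_sub]
  exact hΦ _ ((Submodule.span 𝕜 s).topologicalClosure.sub_mem hx hy)

theorem mapsTo_closure_span_of_isClosed {W : Submodule 𝕜 V} (hW : IsClosed (W : Set V))
    {Φ : V →ₗ[𝕜] V} (hΦ : ∀ x ∈ closure (Submodule.span 𝕜 s : Set V), ‖Φ x‖ ≤ ‖x‖)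
    (hs : Set.MapsTo Φ s W) : Set.MapsTo Φ (closure (Submodule.span 𝕜 s)) W := by
  have hspan : Set.MapsTo Φ (Submodule.span 𝕜 s) W := (Submodule.span_le (p := W.comap Φ)).2 hs
  rw [← hW.closure_eq]
  exact hspan.closure_of_continuousOn (lipschitzOnWith_one_closure_span hΦ).continuousOn

theorem tendsto_norm_map_sub_of_mem_closure_span {I : Type*} {l : Filter I} {Φ : I → V →ₗ[𝕜] V}
    (hΦ : ∀ i, ∀ x ∈ closure (Submodule.span 𝕜 s : Set V), ‖Φ i x‖ ≤ ‖x‖)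
    (hs : ∀ x ∈ s, Tendsto (fun i => ‖Φ i x - x‖) l (𝓝 0)) {x : V}
    (hx : x ∈ closure (Submodule.span 𝕜 s : Set V)) :
    Tendsto (fun i => ‖Φ i x - x‖) l (𝓝 0) := by
  have hspan y (hy : y ∈ Submodule.span 𝕜 s) : Tendsto (fun i => Φ i y) l (𝓝 y) := by
    induction hy using Submodule.span_induction with
    | mem y hy => exact tendsto_iff_norm_sub_tendsto_zero.2 (hs y hy)
    | zero => simpa only [map_zero] using tendsto_const_nhds
    | add y z _ _ hy hz => simpa only [map_add] using hy.add hz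
    | smul c y _ hy => simpa only [map_smul] using hy.const_smul c
  rw [← tendsto_iff_norm_sub_tendsto_zero]
  refine Metric.tendsto_nhds.2 fun ε hε => ?_
  obtain ⟨y, hy, hxy⟩ := Metric.mem_closure_iff.1 hx (ε / 3) (by positivity)
  filter_upwards [Metric.tendsto_nhds.1 (hspan y hy) (ε / 3) (by positivity)] with i hi
  have hΦxy : dist (Φ i x) (Φ i y) ≤ dist x y := by
    simpa using (lipschitzOnWith_one_closure_span (hΦ i)).dist_le_mul x hx y (subset_closure hy)
  linarith [dist_triangle4 (Φ i x) (Φ i y) y x, dist_comm x y]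

end Density

section DynToCrossed

variable {H : Type*} [NormedAddCommGroup H] [InnerProductSpace ℂ H] [CompleteSpace H]
  {G : Type*} [Group G] {A : Type*} [NonUnitalCStarAlgebra A] {ι : A →⋆ₙₐ[ℂ] 𝓑(H)}
  {α : G → A ≃⋆ₐ[ℂ] A} {F : G → A →ₗ[ℂ] A} {Φ : 𝓑(ℓ²(G, H)) →ₗ[ℂ] 𝓑(ℓ²(G, H))}

namespace HSGenProp

variable (hgen : HSGenProp ι α F Φ)
include hgen

theorem map_piRep (a : A) : Φ (piRep ι α a) = piRep ι α (F 1 a) := by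
  simpa only [lam_one, mul_one] using hgen a 1

theorem norm_apply_le (hι : Function.Injective ι) (hα : IsAction α) (hΦ : CPOnCrossed ι α Φ) {C : ℝ}
    (hC : CBBoundOnCrossed ι α Φ C) (hF : CBBound (fun a => ι a) (fun a => ι a) (F 1) 1)
    {x : 𝓑(ℓ²(G, H))} (hx : x ∈ CrossedSet ι α) : ‖Φ x‖ ≤ ‖x‖ := by
  have hΦC x (hx : x ∈ CrossedSet ι α) : ‖Φ x‖ ≤ C * ‖x‖ := by
    simpa only [norm_matOp_of_unique] using! hC 1 (of fun _ _ => x) fun _ _ => hx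
  have hF1 a : ‖F 1 a‖ ≤ ‖a‖ := by
    simpa only [norm_matOp_of_unique, map_apply, of_apply, NonUnitalStarAlgHom.norm_map ι hι,
      one_mul] using hF 1 (of fun _ _ => a)
  obtain ⟨l, hlbot, hlnorm, hl⟩ := exists_isSelfAdjointApproxUnit_map_piRep ι hα
  have hunit : ∀ᶠ e in l.map (piRep ι α), ‖Φ (e * e)‖ ≤ 1 := by
    refine eventually_map.2 (hlnorm.mono fun e he => ?_)
    rw [← piRep_mul, hgen.map_piRep]
    calc ‖piRep ι α (F 1 (e * e))‖ ≤ ‖F 1 (e * e)‖ := norm_piRep_le ι α _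
      _ ≤ ‖e * e‖ := hF1 _
      _ ≤ ‖e‖ * ‖e‖ := norm_mul_le e e
      _ ≤ 1 := mul_le_one₀ he (norm_nonneg e) he
  have := IsCPOn.norm_matOp_map_le (B := (algCrossedProduct ι hα).topologicalClosure) hΦ.2
    hl.topologicalClosure hΦC hunit (M := of fun _ _ : Unit => x) fun _ _ => hx
  simpa only [norm_matOp_of_unique, one_mul] using! this

theorem finiteDimensional_span_image (hnorm : ∀ x ∈ CrossedSet ι α, ‖Φ x‖ ≤ ‖x‖)
    (hsupp : (Function.support F).Finite) (hfd : ∀ s, FiniteDimensional ℂ (LinearMap.range (F s))) :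
    FiniteDimensional ℂ (Submodule.span ℂ (Φ '' CrossedSet ι α)) := by
  let W : Submodule ℂ 𝓑(ℓ²(G, H)) := hsupp.toFinset.sup fun s =>
    (LinearMap.range (F s)).map (LinearMap.mulRight ℂ (lam s) ∘ₗ piRepLin ι α)
  have : FiniteDimensional ℂ W := Submodule.finiteDimensional_finset_sup _ _
  have hgenW : Set.MapsTo Φ {x | ∃ (a : A) (t : G), x = piRep ι α a * lam t} W := by
    rintro _ ⟨a, s, rfl⟩
    rw [hgen a s]
    by_cases hs : s ∈ Function.support F
    · exact Finset.le_sup (f := fun s => (LinearMap.range (F s)).map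
        (LinearMap.mulRight ℂ (lam s) ∘ₗ piRepLin ι α)) (hsupp.mem_toFinset.2 hs)
        ⟨F s a, ⟨a, rfl⟩, rfl⟩
    · rw [Function.notMem_support.1 hs, LinearMap.zero_apply, ← piHom_apply, map_zero, zero_mul]
      exact zero_mem W
  have hW := mapsTo_closure_span_of_isClosed W.closed_of_finiteDimensional hnorm hgenW
  exact Submodule.finiteDimensional_of_le (Submodule.span_le.2 hW.image_subset)

end HSGenProp

theorem DynNuclear.crossedNuclear (hι : Function.Injective ι) (hα : IsAction α)
    (h : DynNuclear ι α) : CrossedNuclear ι α := by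
  obtain ⟨I, hI, hS, F, hHS, hsupp, hcb, hfd, hlim⟩ := h
  choose Φ hgen hcp C _ hC using hHS
  have hnorm i x (hx : x ∈ CrossedSet ι α) : ‖Φ i x‖ ≤ ‖x‖ :=
    (hgen i).norm_apply_le hι hα (hcp i) (hC i) (hcb i) hx
  refine ⟨I, hI, hS, Φ, hcp, hnorm,
    fun i => (hgen i).finiteDimensional_span_image (hnorm i) (hsupp i) (hfd i),
    fun x hx => tendsto_norm_map_sub_of_mem_closure_span hnorm ?_ hx⟩
  rintro _ ⟨a, s, rfl⟩
  refine squeeze_zero (fun i => norm_nonneg _) (fun i => ?_) (hlim s a)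
  rw [hgen i a s, ← sub_mul, ← piHom_apply, ← piHom_apply, ← map_sub, piHom_apply]
  exact (norm_mul_lam_le _ s).trans (norm_piRep_le ι α _)

end DynToCrossed

theorem dynNuclear_iff_crossedNuclear_general
    {H : Type*} [NormedAddCommGroup H] [InnerProductSpace ℂ H] [CompleteSpace H]
    {A : Type*} [NonUnitalCStarAlgebra A] {G : Type*} [Group G]
    (ι : A →⋆ₙₐ[ℂ] 𝓑(H)) (hisom : ∀ a : A, ‖ι a‖ = ‖a‖) (α : G → A ≃⋆ₐ[ℂ] A) (hα : IsAction α) :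
    DynNuclear ι α ↔ CrossedNuclear ι α :=
  have hι : Function.Injective ι := (AddMonoidHomClass.isometry_of_norm ι hisom).injective
  ⟨DynNuclear.crossedNuclear hι hα, CrossedNuclear.dynNuclear hι hα⟩

/-- **Theorem 4.4.** Let `G` be a discrete group and `(A,G,α)` a C*-dynamical system.
Then `(A,G,α)` is nuclear if and only if the reduced crossed product `A ⋊_{α,r} G` is
a nuclear C*-algebra. -/
theorem dynNuclear_iff_crossedNuclear
    {H : Type*} [NormedAddCommGroup H] [InnerProductSpace ℂ H] [CompleteSpace H]
    {A : Type*} [NonUnitalCStarAlgebra A] {G : Type*} [Group G]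
    (ι : A →⋆ₙₐ[ℂ] (H →L[ℂ] H)) (hisom : ∀ a : A, ‖ι a‖ = ‖a‖)
    (hnd : NondegenerateRep ι)
    (α : G → A ≃⋆ₐ[ℂ] A) (hα : IsAction α) :
    DynNuclear ι α ↔ CrossedNuclear ι α :=
  dynNuclear_iff_crossedNuclear_general ι hisom α hα

end
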